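/- Suppose X = (X',U) and Y = (Y',U) where the joint pmf of (X',U,Y') factors so that X'−U−Y' forms a Markov chain. Then for all distortion pairs (d1,d2) ∈ ℝ₊², R(d1,d2) = max{ R_{X|Y}(d1), R_{Y|X}(d2) } = max{ R^{WZ}_{X|Y}(d1), R^{WZ}_{Y|X}(d2) } = max{ R_{X|U}(d1), R_{Y|U}(d2) }. In particular, if X and Y are independent then R(d1,d2) = max{ R_X(d1), R_Y(d2) }. -/

import Mathlib

open scoped BigOperators Classical

noncomputable section

namespace TWR

/-- Base-2 Shannon entropy of a finitely supported distribution (with the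
convention `0 * log 0 = 0`, automatic since `Real.logb 2 0 = 0`). -/
def H2 {α : Type} [Fintype α] (p : α → ℝ) : ℝ :=
  -∑ a, p a * Real.logb 2 (p a)

/-- `p` is a probability mass function. -/
def IsPmf {α : Type} [Fintype α] (p : α → ℝ) : Prop :=
  (∀ a, 0 ≤ p a) ∧ ∑ a, p a = 1

/-- `W` is a conditional pmf. -/
def IsCondPmf {α β : Type} [Fintype β] (W : α → β → ℝ) : Prop :=
  ∀ a, IsPmf (W a)

/-- Mutual information `I(A;B)` (base 2) of a joint pmf on `α × β`. -/
def MI {α β : Type} [Fintype α] [Fintype β] (p : α × β → ℝ) : ℝ :=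
  H2 (fun a => ∑ b, p (a, b)) + H2 (fun b => ∑ a, p (a, b)) - H2 p

/-- Conditional entropy `H(A|B)` of a joint pmf on `α × β`. -/
def condH {α β : Type} [Fintype α] [Fintype β] (p : α × β → ℝ) : ℝ :=
  H2 p - H2 (fun b => ∑ a, p (a, b))

/-- Conditional mutual information `I(A;C|B)` of a joint pmf on `α × β × γ`,
conditioning on the middle coordinate (`I(A;C|B) = H(A,B)+H(B,C)-H(A,B,C)-H(B)`). -/
def condMI {α β γ : Type} [Fintype α] [Fintype β] [Fintype γ] (p : α × β × γ → ℝ) : ℝ :=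
  H2 (fun ab : α × β => ∑ c, p (ab.1, ab.2, c)) +
    H2 (fun bc : β × γ => ∑ a, p (a, bc.1, bc.2)) -
    H2 p - H2 (fun b : β => ∑ a, ∑ c, p (a, b, c))

/-- Markov chain `A − B − C` for a joint pmf on `α × β × γ`. -/
def Markov {α β γ : Type} [Fintype α] [Fintype β] [Fintype γ] (p : α × β × γ → ℝ) : Prop :=
  ∀ a b c, p (a, b, c) * (∑ a', ∑ c', p (a', b, c')) =
    (∑ c', p (a, b, c')) * (∑ a', p (a', b, c))

variable {𝒳 𝒴 Xh Yh 𝒲 𝒰 𝒱 : Type}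
variable [Fintype 𝒳] [Fintype 𝒴] [Fintype Xh] [Fintype Yh]
variable [Fintype 𝒲] [Fintype 𝒰] [Fintype 𝒱]

/-- The i.i.d. block source. -/
def iid (q : 𝒳 × 𝒴 → ℝ) (n : ℕ) : (Fin n → 𝒳) × (Fin n → 𝒴) → ℝ :=
  fun xy => ∏ i, q (xy.1 i, xy.2 i)

/-- Average distortion at receiver 1 of the RD code `(f, g1, ·)`. -/
def Delta1 (q : 𝒳 × 𝒴 → ℝ) (δ1 : 𝒳 → Xh → ℝ) {n m : ℕ}
    (f : (Fin n → 𝒳) × (Fin n → 𝒴) → Fin m)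
    (g1 : Fin m × (Fin n → 𝒴) → Fin n → Xh) : ℝ :=
  ∑ xy : (Fin n → 𝒳) × (Fin n → 𝒴),
    iid q n xy * ((n : ℝ)⁻¹ * ∑ i, δ1 (xy.1 i) (g1 (f xy, xy.2) i))

/-- Average distortion at receiver 2 of the RD code `(f, ·, g2)`. -/
def Delta2 (q : 𝒳 × 𝒴 → ℝ) (δ2 : 𝒴 → Yh → ℝ) {n m : ℕ}
    (f : (Fin n → 𝒳) × (Fin n → 𝒴) → Fin m)
    (g2 : Fin m × (Fin n → 𝒳) → Fin n → Yh) : ℝ :=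
  ∑ xy : (Fin n → 𝒳) × (Fin n → 𝒴),
    iid q n xy * ((n : ℝ)⁻¹ * ∑ i, δ2 (xy.2 i) (g2 (f xy, xy.1) i))

/-- `r` is a `(d1,d2)`-achievable rate (source coding). -/
def RDAchievable (q : 𝒳 × 𝒴 → ℝ) (δ1 : 𝒳 → Xh → ℝ) (δ2 : 𝒴 → Yh → ℝ)
    (d1 d2 r : ℝ) : Prop :=
  ∀ ε > (0 : ℝ), ∃ (n m : ℕ) (f : (Fin n → 𝒳) × (Fin n → 𝒴) → Fin m)
    (g1 : Fin m × (Fin n → 𝒴) → Fin n → Xh)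
    (g2 : Fin m × (Fin n → 𝒳) → Fin n → Yh),
    0 < n ∧ Real.logb 2 m / n ≤ r + ε ∧
    Delta1 q δ1 f g1 ≤ d1 + ε ∧ Delta2 q δ2 f g2 ≤ d2 + ε

/-- The rate-distortion function `R(d1,d2)`. -/
def RD (q : 𝒳 × 𝒴 → ℝ) (δ1 : 𝒳 → Xh → ℝ) (δ2 : 𝒴 → Yh → ℝ) (d1 d2 : ℝ) : ℝ :=
  sInf {r : ℝ | 0 ≤ r ∧ RDAchievable q δ1 δ2 d1 d2 r}

/-- `r` is `(d1,d2)`-achievable with common reconstructions. -/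
def CRAchievable (q : 𝒳 × 𝒴 → ℝ) (δ1 : 𝒳 → Xh → ℝ) (δ2 : 𝒴 → Yh → ℝ)
    (d1 d2 r : ℝ) : Prop :=
  ∀ ε > (0 : ℝ), ∃ (n m : ℕ) (f : (Fin n → 𝒳) × (Fin n → 𝒴) → Fin m)
    (g1 : Fin m × (Fin n → 𝒴) → Fin n → Xh)
    (g2 : Fin m × (Fin n → 𝒳) → Fin n → Yh)
    (φ1 : Fin m × (Fin n → 𝒴) → Fin n → Yh)
    (φ2 : Fin m × (Fin n → 𝒳) → Fin n → Xh),
    0 < n ∧ Real.logb 2 m / n ≤ r + ε ∧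
    Delta1 q δ1 f g1 ≤ d1 + ε ∧ Delta2 q δ2 f g2 ≤ d2 + ε ∧
    (∑ xy : (Fin n → 𝒳) × (Fin n → 𝒴),
      if φ2 (f xy, xy.1) = g1 (f xy, xy.2) then 0 else iid q n xy) ≤ ε ∧
    (∑ xy : (Fin n → 𝒳) × (Fin n → 𝒴),
      if φ1 (f xy, xy.2) = g2 (f xy, xy.1) then 0 else iid q n xy) ≤ ε

/-- The common-reconstruction rate-distortion function `R_CR(d1,d2)`. -/
def CRRD (q : 𝒳 × 𝒴 → ℝ) (δ1 : 𝒳 → Xh → ℝ) (δ2 : 𝒴 → Yh → ℝ) (d1 d2 : ℝ) : ℝ :=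
  sInf {r : ℝ | 0 ≤ r ∧ CRAchievable q δ1 δ2 d1 d2 r}

/-- The conditional rate-distortion function `R_{X|Y}(d1)`. -/
def condRD (q : 𝒳 × 𝒴 → ℝ) (δ1 : 𝒳 → Xh → ℝ) (d1 : ℝ) : ℝ :=
  sInf {r : ℝ | ∃ W : 𝒳 × 𝒴 → Xh → ℝ, IsCondPmf W ∧
    (∑ x, ∑ y, ∑ xh, q (x, y) * W (x, y) xh * δ1 x xh) ≤ d1 ∧
    r = condMI (fun t : 𝒳 × 𝒴 × Xh => q (t.1, t.2.1) * W (t.1, t.2.1) t.2.2)}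

/-- Swap the two components of a joint source. -/
def swap (q : 𝒳 × 𝒴 → ℝ) : 𝒴 × 𝒳 → ℝ := fun t => q (t.2, t.1)

/-- The marginal rate-distortion function `R_X(d)`. -/
def margRD (qX : 𝒳 → ℝ) (δ1 : 𝒳 → Xh → ℝ) (d1 : ℝ) : ℝ :=
  sInf {r : ℝ | ∃ W : 𝒳 → Xh → ℝ, IsCondPmf W ∧
    (∑ x, ∑ xh, qX x * W x xh * δ1 x xh) ≤ d1 ∧
    r = MI (fun t : 𝒳 × Xh => qX t.1 * W t.1 t.2)}

def margX (q : 𝒳 × 𝒴 → ℝ) : 𝒳 → ℝ := fun x => ∑ y, q (x, y)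
def margY (q : 𝒳 × 𝒴 → ℝ) : 𝒴 → ℝ := fun y => ∑ x, q (x, y)

/-- The joint rate-distortion function `R_{XY}(d1,d2)`. -/
def jointRD (q : 𝒳 × 𝒴 → ℝ) (δ1 : 𝒳 → Xh → ℝ) (δ2 : 𝒴 → Yh → ℝ) (d1 d2 : ℝ) : ℝ :=
  sInf {r : ℝ | ∃ W : 𝒳 × 𝒴 → Xh × Yh → ℝ, IsCondPmf W ∧
    (∑ xy : 𝒳 × 𝒴, ∑ z : Xh × Yh, q xy * W xy z * δ1 xy.1 z.1) ≤ d1 ∧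
    (∑ xy : 𝒳 × 𝒴, ∑ z : Xh × Yh, q xy * W xy z * δ2 xy.2 z.2) ≤ d2 ∧
    r = MI (fun t : (𝒳 × 𝒴) × (Xh × Yh) => q t.1 * W t.1 t.2)}

/-- The Wyner–Ziv rate-distortion function `R^{WZ}_{X|Y}(d1)`
(with auxiliary alphabet of cardinality `|𝒳| + 1`). -/
def wzRD (q : 𝒳 × 𝒴 → ℝ) (δ1 : 𝒳 → Xh → ℝ) (d1 : ℝ) : ℝ :=
  sInf {r : ℝ | ∃ p : Fin (Fintype.card 𝒳 + 1) × 𝒳 × 𝒴 → ℝ, IsPmf p ∧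
    (∀ x y, (∑ a, p (a, x, y)) = q (x, y)) ∧ Markov p ∧
    (∃ π1 : Fin (Fintype.card 𝒳 + 1) × 𝒴 → Xh,
      (∑ a, ∑ x, ∑ y, p (a, x, y) * δ1 x (π1 (a, y))) ≤ d1) ∧
    r = condMI (fun t : 𝒳 × 𝒴 × Fin (Fintype.card 𝒳 + 1) => p (t.2.2, t.1, t.2.1))}

/-- The set over which the single-letter CR formula
`max{I(X;X̂,Ŷ|Y), I(Y;X̂,Ŷ|X)}` is minimised. -/
def crFormulaSet (q : 𝒳 × 𝒴 → ℝ) (δ1 : 𝒳 → Xh → ℝ) (δ2 : 𝒴 → Yh → ℝ)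
    (d1 d2 : ℝ) : Set ℝ :=
  {r : ℝ | ∃ W : 𝒳 × 𝒴 → Xh × Yh → ℝ, IsCondPmf W ∧
    (∑ x, ∑ y, ∑ z : Xh × Yh, q (x, y) * W (x, y) z * δ1 x z.1) ≤ d1 ∧
    (∑ x, ∑ y, ∑ z : Xh × Yh, q (x, y) * W (x, y) z * δ2 y z.2) ≤ d2 ∧
    r = max
      (condMI (fun t : 𝒳 × 𝒴 × (Xh × Yh) => q (t.1, t.2.1) * W (t.1, t.2.1) t.2.2))
      (condMI (fun t : 𝒴 × 𝒳 × (Xh × Yh) => q (t.2.1, t.1) * W (t.2.1, t.1) t.2.2))}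

/-- Joint law of source blocks and channel outputs for a JSC encoder. -/
def jscP (q : 𝒳 × 𝒴 → ℝ) (qUV : 𝒲 → 𝒰 × 𝒱 → ℝ) {n m : ℕ}
    (f : (Fin n → 𝒳) × (Fin n → 𝒴) → Fin m → 𝒲)
    (x : Fin n → 𝒳) (y : Fin n → 𝒴) (u : Fin m → 𝒰) (v : Fin m → 𝒱) : ℝ :=
  (∏ i, q (x i, y i)) * ∏ j, qUV (f (x, y) j) (u j, v j)

/-- `(d1,d2)` is achievable by joint source-channel coding with source rate `κs`
and channel rate `κc` (bandwidth expansion `κc/κs`). -/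
def JSCAchievable (q : 𝒳 × 𝒴 → ℝ) (qUV : 𝒲 → 𝒰 × 𝒱 → ℝ)
    (δ1 : 𝒳 → Xh → ℝ) (δ2 : 𝒴 → Yh → ℝ) (κs κc d1 d2 : ℝ) : Prop :=
  ∀ ε > (0 : ℝ), ∃ (t n m : ℕ) (f : (Fin n → 𝒳) × (Fin n → 𝒴) → Fin m → 𝒲)
    (g1 : (Fin m → 𝒰) × (Fin n → 𝒴) → Fin n → Xh)
    (g2 : (Fin m → 𝒱) × (Fin n → 𝒳) → Fin n → Yh),
    0 < t ∧ (n : ℝ) = κs * t ∧ (m : ℝ) = κc * t ∧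
    (∑ x : Fin n → 𝒳, ∑ y : Fin n → 𝒴, ∑ u : Fin m → 𝒰, ∑ v : Fin m → 𝒱,
      jscP q qUV f x y u v * ((n : ℝ)⁻¹ * ∑ i, δ1 (x i) (g1 (u, y) i))) ≤ d1 + ε ∧
    (∑ x : Fin n → 𝒳, ∑ y : Fin n → 𝒴, ∑ u : Fin m → 𝒰, ∑ v : Fin m → 𝒱,
      jscP q qUV f x y u v * ((n : ℝ)⁻¹ * ∑ i, δ2 (y i) (g2 (v, x) i))) ≤ d2 + ε

/-- `(d1,d2)` is achievable by joint source-channel coding with common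
reconstructions, source rate `κs` and channel rate `κc`. -/
def CRJSCAchievable (q : 𝒳 × 𝒴 → ℝ) (qUV : 𝒲 → 𝒰 × 𝒱 → ℝ)
    (δ1 : 𝒳 → Xh → ℝ) (δ2 : 𝒴 → Yh → ℝ) (κs κc d1 d2 : ℝ) : Prop :=
  ∀ ε > (0 : ℝ), ∃ (t n m : ℕ) (f : (Fin n → 𝒳) × (Fin n → 𝒴) → Fin m → 𝒲)
    (g1 : (Fin m → 𝒰) × (Fin n → 𝒴) → Fin n → Xh)
    (g2 : (Fin m → 𝒱) × (Fin n → 𝒳) → Fin n → Yh)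
    (φ1 : (Fin m → 𝒰) × (Fin n → 𝒴) → Fin n → Yh)
    (φ2 : (Fin m → 𝒱) × (Fin n → 𝒳) → Fin n → Xh),
    0 < t ∧ (n : ℝ) = κs * t ∧ (m : ℝ) = κc * t ∧
    (∑ x : Fin n → 𝒳, ∑ y : Fin n → 𝒴, ∑ u : Fin m → 𝒰, ∑ v : Fin m → 𝒱,
      jscP q qUV f x y u v * ((n : ℝ)⁻¹ * ∑ i, δ1 (x i) (g1 (u, y) i))) ≤ d1 + ε ∧
    (∑ x : Fin n → 𝒳, ∑ y : Fin n → 𝒴, ∑ u : Fin m → 𝒰, ∑ v : Fin m → 𝒱,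
      jscP q qUV f x y u v * ((n : ℝ)⁻¹ * ∑ i, δ2 (y i) (g2 (v, x) i))) ≤ d2 + ε ∧
    (∑ x : Fin n → 𝒳, ∑ y : Fin n → 𝒴, ∑ u : Fin m → 𝒰, ∑ v : Fin m → 𝒱,
      if φ2 (v, x) = g1 (u, y) then 0 else jscP q qUV f x y u v) ≤ ε ∧
    (∑ x : Fin n → 𝒳, ∑ y : Fin n → 𝒴, ∑ u : Fin m → 𝒰, ∑ v : Fin m → 𝒱,
      if φ1 (u, y) = g2 (v, x) then 0 else jscP q qUV f x y u v) ≤ ε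

/-- `I(W;U)` under the joint law `pW · qUV` (U-marginal of the broadcast channel). -/
def chMIU (qUV : 𝒲 → 𝒰 × 𝒱 → ℝ) (pW : 𝒲 → ℝ) : ℝ :=
  MI (fun t : 𝒲 × 𝒰 => pW t.1 * ∑ v, qUV t.1 (t.2, v))

/-- `I(W;V)` under the joint law `pW · qUV` (V-marginal of the broadcast channel). -/
def chMIV (qUV : 𝒲 → 𝒰 × 𝒱 → ℝ) (pW : 𝒲 → ℝ) : ℝ :=
  MI (fun t : 𝒲 × 𝒱 => pW t.1 * ∑ u, qUV t.1 (u, t.2))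

/-- The doubly symmetric binary source with crossover probability `ρ`. -/
def dsbs (ρ : ℝ) : Bool × Bool → ℝ :=
  fun t => if t.1 = t.2 then (1 - ρ) / 2 else ρ / 2

/-- The Hamming distortion measure. -/
def dHam {α : Type} : α → α → ℝ := fun a b => if a = b then 0 else 1

/-- The binary entropy function (base 2). -/
def binEnt (x : ℝ) : ℝ := -(x * Real.logb 2 x) - (1 - x) * Real.logb 2 (1 - x)

/-- A difference distortion measure built from a per-letter function of the
(modular) difference. -/
def diffD {l : ℕ} (δ : Fin l → ℝ) : Fin l → Fin l → ℝ := fun a b => δ (a - b)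

/-- Capacity of the modulo-additive channel with noise `pN` and input
distortion constraint `d`. -/
def Cadd {l : ℕ} (δ : Fin l → ℝ) (d : ℝ) (pN : Fin l → ℝ) : ℝ :=
  sSup {r : ℝ | ∃ pW : Fin l → ℝ, IsPmf pW ∧ (∑ w, pW w * δ w) ≤ d ∧
    r = MI (fun t : Fin l × Fin l => pW t.1 * pN (t.2 - t.1))}

/-- The minimax (worst-noise) capacity under distortion constraint `d`. -/
def Cworst {l : ℕ} (δ : Fin l → ℝ) (d : ℝ) : ℝ :=
  sInf {r : ℝ | ∃ pN : Fin l → ℝ, IsPmf pN ∧ (∑ x, pN x * δ x) ≤ d ∧ r = Cadd δ d pN}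

/-- Wyner's common information `K(X;Y)` (auxiliary alphabet of size 4). -/
def wynerK (q : 𝒳 × 𝒴 → ℝ) : ℝ :=
  sInf {r : ℝ | ∃ W : 𝒳 × 𝒴 → Fin 4 → ℝ, IsCondPmf W ∧
    Markov (fun t : 𝒳 × Fin 4 × 𝒴 => q (t.1, t.2.2) * W (t.1, t.2.2) t.2.1) ∧
    r = MI (fun t : (𝒳 × 𝒴) × Fin 4 => q t.1 * W t.1 t.2)}

/-- The one-description (Kimura–Uyematsu) upper bound `R_U*(d1,d2)`. -/
def oneDescUB (q : 𝒳 × 𝒴 → ℝ) (δ1 : 𝒳 → Xh → ℝ) (δ2 : 𝒴 → Yh → ℝ) (d1 d2 : ℝ) : ℝ :=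
  sInf {r : ℝ | ∃ W : 𝒳 × 𝒴 → Fin (Fintype.card 𝒳 * Fintype.card 𝒴 + 2) → ℝ,
    IsCondPmf W ∧
    (∃ π1 : Fin (Fintype.card 𝒳 * Fintype.card 𝒴 + 2) × 𝒴 → Xh,
      (∑ x, ∑ y, ∑ c, q (x, y) * W (x, y) c * δ1 x (π1 (c, y))) ≤ d1) ∧
    (∃ π2 : Fin (Fintype.card 𝒳 * Fintype.card 𝒴 + 2) × 𝒳 → Yh,
      (∑ x, ∑ y, ∑ c, q (x, y) * W (x, y) c * δ2 y (π2 (c, x))) ≤ d2) ∧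
    r = max
      (condMI (fun t : 𝒳 × 𝒴 × Fin (Fintype.card 𝒳 * Fintype.card 𝒴 + 2) =>
        q (t.1, t.2.1) * W (t.1, t.2.1) t.2.2))
      (condMI (fun t : 𝒴 × 𝒳 × Fin (Fintype.card 𝒳 * Fintype.card 𝒴 + 2) =>
        q (t.2.1, t.1) * W (t.2.1, t.1) t.2.2))}

end TWR

/-!
With codebooks for describing `X` given the common part `U`, and `Y` given `U`, the encoder
broadcasts the sum modulo `m` of the two codeword indices; each receiver can form the index meant
for the other one and subtracts it, so the two descriptions share the same bits. Conversely, a code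
serving both receivers serves each one alone, and the letter law obtained from it by drawing a
uniform coordinate is a test channel with `I(X; X̂ | Y) ≤ (log₂ m) / n`. The two bounds
meet: if `X − U − Y` is a Markov chain, then giving the decoder `Y` instead of `U` helps neither
with nor without side information at the encoder. In the Wyner–Ziv problem a test channel
that also sees `U` is allowed because `U` is a function of `X`, and the bound `|𝒳| + 1` on the
auxiliary alphabet is met by moving weight along linear relations between the posterior laws of `X`.
-/

namespace TWR

open Filter Topology

section FiniteLaws

variable {τ τ' β γ : Type} [Fintype τ]

/-- The law of `f t` when `t` is distributed according to `p`. -/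
def pushforward (f : τ → τ') (p : τ → ℝ) : τ' → ℝ :=
  fun t' => ∑ t, if f t = t' then p t else 0

theorem sum_pushforward_mul [Fintype τ'] (f : τ → τ') (p : τ → ℝ) (F : τ' → ℝ) :
    ∑ t', pushforward f p t' * F t' = ∑ t, p t * F (f t) := by
  simp only [pushforward, Finset.sum_mul, ite_mul, zero_mul]
  rw [Finset.sum_comm]
  simp only [Finset.sum_ite_eq, Finset.mem_univ, if_true]

theorem sum_pushforward [Fintype τ'] (f : τ → τ') (p : τ → ℝ) :
    ∑ t', pushforward f p t' = ∑ t, p t := by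
  simpa only [mul_one] using sum_pushforward_mul f p fun _ => 1

theorem pushforward_nonneg {p : τ → ℝ} (hp : ∀ t, 0 ≤ p t) (f : τ → τ') (t' : τ') :
    0 ≤ pushforward f p t' :=
  Finset.sum_nonneg fun t _ => ite_nonneg (hp t) le_rfl

theorem IsPmf.pushforward [Fintype τ'] {p : τ → ℝ} (hp : IsPmf p) (f : τ → τ') :
    IsPmf (pushforward f p) :=
  ⟨pushforward_nonneg hp.1 f, (sum_pushforward f p).trans hp.2⟩

theorem le_pushforward {p : τ → ℝ} (hp : ∀ t, 0 ≤ p t) (f : τ → τ') (t : τ) :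
    p t ≤ TWR.pushforward f p (f t) := by
  have h := Finset.single_le_sum (f := fun s => if f s = f t then p s else 0)
    (fun s _ => ite_nonneg (hp s) le_rfl) (Finset.mem_univ t)
  rwa [if_pos rfl] at h

theorem IsPmf.exists_pos {p : τ → ℝ} (hp : IsPmf p) : ∃ t, 0 < p t := by
  by_contra! h
  have : ∑ t, p t ≤ 0 := Finset.sum_nonpos fun t _ => h t
  linarith [hp.2]

theorem exists_condPmf [Fintype γ] [Nonempty γ] {Q : β × γ → ℝ} (hQ : ∀ t, 0 ≤ Q t) :
    ∃ W : β → γ → ℝ, IsCondPmf W ∧ ∀ b c, (∑ c', Q (b, c')) * W b c = Q (b, c) := by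
  inhabit γ
  refine ⟨fun b c => if ∑ c', Q (b, c') = 0 then (if c = default then 1 else 0)
    else Q (b, c) / ∑ c', Q (b, c'), fun b => ?_, fun b c => ?_⟩
  · by_cases h : ∑ c', Q (b, c') = 0
    · simp only [h, if_true]
      exact ⟨fun c => by positivity, by simp⟩
    · simp only [h, if_false]
      exact ⟨fun c => div_nonneg (hQ _) (Finset.sum_nonneg fun _ _ => hQ _),
        by rw [← Finset.sum_div, div_self h]⟩
  · by_cases h : ∑ c', Q (b, c') = 0
    · have := (Finset.sum_eq_zero_iff_of_nonneg fun c' _ => hQ (b, c')).1 h c (Finset.mem_univ c)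
      rw [h, this, zero_mul]
    · simp only [h, if_false]
      field_simp

end FiniteLaws

section Marginals

variable {α β γ : Type}

/-- The law of the first two coordinates of a triple. -/
def margAB [Fintype γ] (P : α × β × γ → ℝ) (a : α) (b : β) : ℝ := ∑ c, P (a, b, c)

/-- The law of the last two coordinates of a triple. -/
def margBC [Fintype α] (P : α × β × γ → ℝ) (b : β) (c : γ) : ℝ := ∑ a, P (a, b, c)

/-- The law of the middle coordinate of a triple. -/
def margB [Fintype α] [Fintype γ] (P : α × β × γ → ℝ) (b : β) : ℝ := ∑ a, ∑ c, P (a, b, c)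

theorem sum_triple [Fintype α] [Fintype β] [Fintype γ] (F : α × β × γ → ℝ) :
    ∑ t, F t = ∑ a, ∑ b, ∑ c, F (a, b, c) := by
  simp only [Fintype.sum_prod_type]

theorem sum_margAB [Fintype α] [Fintype γ] (P : α × β × γ → ℝ) (b : β) :
    ∑ a, margAB P a b = margB P b := rfl

theorem sum_margBC [Fintype α] [Fintype γ] (P : α × β × γ → ℝ) (b : β) :
    ∑ c, margBC P b c = margB P b :=
  Finset.sum_comm

theorem sum_margB [Fintype α] [Fintype β] [Fintype γ] (P : α × β × γ → ℝ) :
    ∑ b, margB P b = ∑ t, P t := by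
  rw [sum_triple, Finset.sum_comm]; rfl

theorem le_margAB [Fintype γ] {P : α × β × γ → ℝ} (hP : ∀ t, 0 ≤ P t) (t : α × β × γ) :
    P t ≤ margAB P t.1 t.2.1 :=
  Finset.single_le_sum (f := fun c => P (t.1, t.2.1, c)) (fun _ _ => hP _) (Finset.mem_univ t.2.2)

theorem le_margBC [Fintype α] {P : α × β × γ → ℝ} (hP : ∀ t, 0 ≤ P t) (t : α × β × γ) :
    P t ≤ margBC P t.2.1 t.2.2 :=
  Finset.single_le_sum (f := fun a => P (a, t.2.1, t.2.2)) (fun _ _ => hP _) (Finset.mem_univ t.1)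

theorem le_margB [Fintype α] [Fintype γ] {P : α × β × γ → ℝ} (hP : ∀ t, 0 ≤ P t)
    (t : α × β × γ) : P t ≤ margB P t.2.1 :=
  (le_margAB hP t).trans <| Finset.single_le_sum (f := fun a => margAB P a t.2.1)
    (fun _ _ => Finset.sum_nonneg fun _ _ => hP _) (Finset.mem_univ t.1)

/-- The conditional probability of the first coordinate given the other two, `0` where the latter
have probability `0`. -/
def posterior [Fintype α] (P : α × β × γ → ℝ) (t : α × β × γ) : ℝ := P t / margBC P t.2.1 t.2.2

theorem posterior_nonneg [Fintype α] {P : α × β × γ → ℝ} (hP : ∀ t, 0 ≤ P t) (t : α × β × γ) :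
    0 ≤ posterior P t :=
  div_nonneg (hP t) (Finset.sum_nonneg fun _ _ => hP _)

theorem posterior_pos [Fintype α] {P : α × β × γ → ℝ} (hP : ∀ t, 0 ≤ P t) {t : α × β × γ}
    (ht : 0 < P t) : 0 < posterior P t :=
  div_pos ht (ht.trans_le (le_margBC hP t))

theorem sum_posterior_le_one [Fintype α] (P : α × β × γ → ℝ) (b : β) (c : γ) :
    ∑ a, posterior P (a, b, c) ≤ 1 := by
  simp only [posterior, ← Finset.sum_div]
  exact div_self_le_one _

end Marginals

section ConditionalMutualInformation

variable {τ α β γ β' γ' : Type} [Fintype α] [Fintype β] [Fintype γ]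

theorem condMI_eq_sum (P : α × β × γ → ℝ) :
    condMI P = ∑ t, P t * (Real.logb 2 (P t) + Real.logb 2 (margB P t.2.1)
      - Real.logb 2 (margAB P t.1 t.2.1) - Real.logb 2 (margBC P t.2.1 t.2.2)) := by
  have hAB : ∑ ab : α × β, (∑ c, P (ab.1, ab.2, c)) * Real.logb 2 (∑ c, P (ab.1, ab.2, c))
      = ∑ t, P t * Real.logb 2 (margAB P t.1 t.2.1) := by
    simp only [Fintype.sum_prod_type, Finset.sum_mul, margAB]
  have hBC : ∑ bc : β × γ, (∑ a, P (a, bc.1, bc.2)) * Real.logb 2 (∑ a, P (a, bc.1, bc.2))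
      = ∑ t, P t * Real.logb 2 (margBC P t.2.1 t.2.2) := by
    simp only [Finset.sum_mul, margBC]
    rw [Finset.sum_comm, Fintype.sum_prod_type]
  have hB : ∑ b, (∑ a, ∑ c, P (a, b, c)) * Real.logb 2 (∑ a, ∑ c, P (a, b, c))
      = ∑ t, P t * Real.logb 2 (margB P t.2.1) := by
    simp only [sum_triple, Finset.sum_mul, margB]
    rw [Finset.sum_comm]
  simp only [condMI, H2, hAB, hBC, hB, mul_sub, mul_add, Finset.sum_sub_distrib,
    Finset.sum_add_distrib]
  ring

theorem sum_mul_logb_div_le [Fintype τ] {p T : τ → ℝ} {M : ℝ} (hp : IsPmf p)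
    (hT : ∀ t, 0 ≤ T t) (hpT : ∀ t, 0 < p t → 0 < T t) (hM : ∑ t, T t ≤ M) :
    ∑ t, p t * Real.logb 2 (T t / p t) ≤ Real.logb 2 M := by
  obtain ⟨t₀, ht₀⟩ := hp.exists_pos
  have hM0 : 0 < M := (hpT t₀ ht₀).trans_le <|
    (Finset.single_le_sum (fun t _ => hT t) (Finset.mem_univ t₀)).trans hM
  have log_le : ∀ t, p t * Real.log (T t / p t) ≤ p t * Real.log M + (T t / M - p t) := fun t => by
    rcases (hp.1 t).eq_or_lt with h | h
    · simpa [← h] using div_nonneg (hT t) hM0.le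
    · have key := Real.log_le_sub_one_of_pos (x := T t / p t / M)
        (div_pos (div_pos (hpT t h) h) hM0)
      rw [Real.log_div (div_pos (hpT t h) h).ne' hM0.ne'] at key
      have := mul_le_mul_of_nonneg_left key h.le
      have cancel : p t * (T t / p t / M - 1) = T t / M - p t := by field_simp
      linarith
  have : ∑ t, p t * Real.log (T t / p t) ≤ Real.log M := calc
    _ ≤ ∑ t, (p t * Real.log M + (T t / M - p t)) := Finset.sum_le_sum fun t _ => log_le t
    _ = Real.log M + ((∑ t, T t) / M - 1) := by
      rw [Finset.sum_add_distrib, Finset.sum_sub_distrib, ← Finset.sum_mul, hp.2, one_mul,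
        Finset.sum_div]
    _ ≤ Real.log M := by linarith [(div_le_one hM0).2 hM]
  simp only [Real.logb, ← mul_div_assoc, ← Finset.sum_div]
  gcongr

theorem sum_mul_logb_posterior_le_condMI {P : α × β × γ → ℝ} (hP : IsPmf P) {V : α × β × γ → ℝ}
    (hV : ∀ t, 0 ≤ V t) (hPV : ∀ t, 0 < P t → 0 < V t) (hV1 : ∀ b c, ∑ a, V (a, b, c) ≤ 1) :
    ∑ t, P t * (Real.logb 2 (V t) + Real.logb 2 (margB P t.2.1)
      - Real.logb 2 (margAB P t.1 t.2.1)) ≤ condMI P := by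
  have hBC : ∀ b c, 0 ≤ margBC P b c := fun b c => Finset.sum_nonneg fun a _ => hP.1 _
  have hsum : ∑ t, V t * margBC P t.2.1 t.2.2 ≤ 1 := calc
    _ = ∑ b, ∑ c, (∑ a, V (a, b, c)) * margBC P b c := by
      simp only [Finset.sum_mul]
      rw [Fintype.sum_prod_type, Finset.sum_comm, Fintype.sum_prod_type]
    _ ≤ ∑ b, ∑ c, margBC P b c := by
      gcongr with b _ c _
      exact mul_le_of_le_one_left (hBC b c) (hV1 b c)
    _ = 1 := by simp only [sum_margBC, sum_margB, hP.2]
  have hdiv := sum_mul_logb_div_le hP (fun t => mul_nonneg (hV t) (hBC _ _))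
    (fun t ht => mul_pos (hPV t ht) (ht.trans_le (le_margBC hP.1 t))) hsum
  rw [Real.logb_one] at hdiv
  rw [← sub_nonpos, condMI_eq_sum, ← Finset.sum_sub_distrib]
  refine (Finset.sum_congr rfl fun t _ => ?_).trans_le hdiv
  rcases (hP.1 t).eq_or_lt with h | h
  · simp only [← h, zero_mul, sub_zero]
  · rw [Real.logb_div (mul_pos (hPV t h) (h.trans_le (le_margBC hP.1 t))).ne' h.ne',
      Real.logb_mul (hPV t h).ne' (h.trans_le (le_margBC hP.1 t)).ne']
    ring

theorem condMI_nonneg {P : α × β × γ → ℝ} (hP : IsPmf P) : 0 ≤ condMI P := by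
  have hAB : ∀ a b, 0 ≤ margAB P a b := fun a b => Finset.sum_nonneg fun c _ => hP.1 _
  have hB : ∀ b, 0 ≤ margB P b := fun b => Finset.sum_nonneg fun a _ => hAB a b
  have h := sum_mul_logb_posterior_le_condMI hP
    (V := fun t => margAB P t.1 t.2.1 / margB P t.2.1) (fun t => div_nonneg (hAB _ _) (hB _))
    (fun t ht => div_pos (ht.trans_le (le_margAB hP.1 t)) (ht.trans_le (le_margB hP.1 t)))
    (fun b c => by simp only [← Finset.sum_div, sum_margAB]; exact div_self_le_one _)
  refine le_of_eq_of_le (Finset.sum_eq_zero fun t _ => ?_).symm h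
  rcases (hP.1 t).eq_or_lt with h | h
  · rw [← h, zero_mul]
  · rw [Real.logb_div (h.trans_le (le_margAB hP.1 t)).ne' (h.trans_le (le_margB hP.1 t)).ne']
    ring

theorem condMI_pushforward_le [Fintype β'] [Fintype γ'] {P : α × β × γ → ℝ} (hP : IsPmf P)
    {P' : α × β' × γ' → ℝ} (f : β → β') (g : β × γ → γ')
    (hP' : P' = pushforward (fun t => (t.1, f t.2.1, g t.2)) P)
    (hmarkov : ∀ a b, margAB P a b * margB P' (f b) = margAB P' a (f b) * margB P b) :
    condMI P' ≤ condMI P := by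
  have hP'0 : IsPmf P' := hP' ▸ hP.pushforward _
  have hpos : ∀ t, 0 < P t → 0 < P' (t.1, f t.2.1, g t.2) := fun t ht =>
    ht.trans_le (hP' ▸ le_pushforward hP.1 (fun t : α × β × γ => (t.1, f t.2.1, g t.2)) t)
  have h := sum_mul_logb_posterior_le_condMI hP
    (V := fun t => posterior P' (t.1, f t.2.1, g t.2)) (fun _ => posterior_nonneg hP'0.1 _)
    (fun t ht => posterior_pos hP'0.1 (hpos t ht))
    (fun b c => sum_posterior_le_one P' (f b) (g (b, c)))
  refine le_of_eq_of_le ?_ h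
  rw [condMI_eq_sum, hP', sum_pushforward_mul, ← hP']
  refine Finset.sum_congr rfl fun t _ => ?_
  rcases (hP.1 t).eq_or_lt with h | h
  · rw [← h, zero_mul, zero_mul]
  · have hBC := (hpos t h).trans_le (le_margBC hP'0.1 _)
    have hB := (hpos t h).trans_le (le_margB hP'0.1 _)
    have hAB := (hpos t h).trans_le (le_margAB hP'0.1 _)
    have hlog := congrArg (Real.logb 2) (hmarkov t.1 t.2.1)
    rw [Real.logb_mul (h.trans_le (le_margAB hP.1 t)).ne' hB.ne',
      Real.logb_mul hAB.ne' (h.trans_le (le_margB hP.1 t)).ne'] at hlog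
    rw [posterior, Real.logb_div (hpos t h).ne' hBC.ne']
    congr 1
    linarith

end ConditionalMutualInformation

section ConditionalRateDistortion

variable {α β γ : Type}

/-- The joint law of `(X, Y, C)` when `(X, Y)` has law `q` and `C` is the output of the test
channel `W` fed with `(X, Y)`. -/
def channelLaw (q : α × β → ℝ) (W : α × β → γ → ℝ) : α × β × γ → ℝ :=
  fun t => q (t.1, t.2.1) * W (t.1, t.2.1) t.2.2

/-- The expected distortion between the first and the last coordinate of a triple. -/
def expectedDistortion [Fintype α] [Fintype β] [Fintype γ] (δ : α → γ → ℝ)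
    (P : α × β × γ → ℝ) : ℝ :=
  ∑ t, P t * δ t.1 t.2.2

/-- The distortion level `d` is met by some reconstruction that sees the source letter. Levels
that are not feasible have an empty set of test channels and of codes. -/
def Feasible [Fintype α] (p : α → ℝ) (δ : α → γ → ℝ) (d : ℝ) : Prop :=
  ∃ g : α → γ, ∑ x, p x * δ x (g x) ≤ d

theorem Feasible.mono [Fintype α] {p : α → ℝ} {δ : α → γ → ℝ} {d d' : ℝ} (h : Feasible p δ d)
    (hd : d ≤ d') : Feasible p δ d' :=
  h.imp fun _ hg => hg.trans hd

variable [Fintype γ]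

theorem margAB_channelLaw (q : α × β → ℝ) {W : α × β → γ → ℝ} (hW : IsCondPmf W) (a : α) (b : β) :
    margAB (channelLaw q W) a b = q (a, b) := by
  simp only [margAB, channelLaw, ← Finset.mul_sum, (hW (a, b)).2, mul_one]

theorem isCompact_setOf_isCondPmf : IsCompact {W : α → γ → ℝ | IsCondPmf W} := by
  have : {W : α → γ → ℝ | IsCondPmf W} = Set.univ.pi fun _ => stdSimplex ℝ γ := by
    ext W
    exact ⟨fun h a _ => h a, fun h a => h a trivial⟩
  rw [this]
  exact isCompact_univ_pi fun _ => isCompact_stdSimplex ℝ γ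

variable [Fintype α] [Fintype β]

theorem IsPmf.channelLaw {q : α × β → ℝ} (hq : IsPmf q) {W : α × β → γ → ℝ} (hW : IsCondPmf W) :
    IsPmf (channelLaw q W) := by
  refine ⟨fun t => mul_nonneg (hq.1 _) ((hW _).1 _), ?_⟩
  calc ∑ t, TWR.channelLaw q W t = ∑ a, ∑ b, margAB (TWR.channelLaw q W) a b := sum_triple _
    _ = 1 := by simp only [margAB_channelLaw q hW, ← Fintype.sum_prod_type, hq.2]

theorem expectedDistortion_channelLaw (δ : α → γ → ℝ) (q : α × β → ℝ) (W : α × β → γ → ℝ) :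
    expectedDistortion δ (channelLaw q W) = ∑ t, q t * ∑ c, W t c * δ t.1 c := by
  simp only [expectedDistortion, channelLaw, Fintype.sum_prod_type, Finset.mul_sum, mul_assoc]

theorem condRD_eq_sInf (q : α × β → ℝ) (δ : α → γ → ℝ) (d : ℝ) :
    condRD q δ d = sInf {r | ∃ W, IsCondPmf W ∧ expectedDistortion δ (channelLaw q W) ≤ d ∧
      r = condMI (channelLaw q W)} := by
  simp only [condRD, expectedDistortion, sum_triple]
  rfl

variable {q : α × β → ℝ} {δ : α → γ → ℝ} {d r : ℝ}

theorem condRD_nonneg (hq : IsPmf q) : 0 ≤ condRD q δ d := by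
  rw [condRD_eq_sInf]
  apply Real.sInf_nonneg
  rintro _ ⟨W, hW, -, rfl⟩
  exact condMI_nonneg (hq.channelLaw hW)

theorem condRD_le_condMI_channelLaw (hq : IsPmf q) {W : α × β → γ → ℝ} (hW : IsCondPmf W)
    (hd : expectedDistortion δ (channelLaw q W) ≤ d) :
    condRD q δ d ≤ condMI (channelLaw q W) := by
  rw [condRD_eq_sInf]
  refine csInf_le ⟨0, ?_⟩ ⟨W, hW, hd, rfl⟩
  rintro _ ⟨W, hW, -, rfl⟩
  exact condMI_nonneg (hq.channelLaw hW)

theorem condRD_le_condMI {Q : α × β × γ → ℝ} (hQ : IsPmf Q)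
    (hQq : ∀ a b, margAB Q a b = q (a, b)) (hd : expectedDistortion δ Q ≤ d) :
    condRD q δ d ≤ condMI Q := by
  obtain ⟨⟨-, -, c⟩, -⟩ := hQ.exists_pos
  have : Nonempty γ := ⟨c⟩
  obtain ⟨W, hW, hQW⟩ := exists_condPmf (Q := fun t : (α × β) × γ => Q (t.1.1, t.1.2, t.2))
    fun t => hQ.1 _
  have hQ_eq : channelLaw q W = Q := by
    ext ⟨a, b, c⟩
    rw [channelLaw, ← hQq]
    exact hQW (a, b) c
  have hq : IsPmf q := ⟨fun t => hQq t.1 t.2 ▸ Finset.sum_nonneg fun _ _ => hQ.1 _, by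
    rw [Fintype.sum_prod_type, ← hQ.2, sum_triple]
    simp only [← hQq, margAB]⟩
  rw [← hQ_eq] at hd ⊢
  exact condRD_le_condMI_channelLaw hq hW hd

theorem Feasible.exists_channel (h : Feasible (margX q) δ d) :
    ∃ W : α × β → γ → ℝ, IsCondPmf W ∧ expectedDistortion δ (channelLaw q W) ≤ d := by
  obtain ⟨g, hg⟩ := h
  refine ⟨fun t c => if c = g t.1 then 1 else 0, fun t => ⟨fun c => by positivity, by simp⟩, ?_⟩
  simpa [expectedDistortion, channelLaw, sum_triple, margX, Finset.sum_mul] using hg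

theorem le_condRD (h : Feasible (margX q) δ d)
    (hr : ∀ W, IsCondPmf W → expectedDistortion δ (channelLaw q W) ≤ d →
      r ≤ condMI (channelLaw q W)) : r ≤ condRD q δ d := by
  rw [condRD_eq_sInf]
  obtain ⟨W, hW, hd⟩ := h.exists_channel
  refine le_csInf ⟨_, W, hW, hd, rfl⟩ ?_
  rintro _ ⟨W, hW, hd, rfl⟩
  exact hr W hW hd

theorem exists_channel_condMI_lt (h : Feasible (margX q) δ d) (hr : condRD q δ d < r) :
    ∃ W, IsCondPmf W ∧ expectedDistortion δ (channelLaw q W) ≤ d ∧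
      condMI (channelLaw q W) < r := by
  by_contra! H
  exact hr.not_ge (le_condRD h H)

theorem continuous_H2 : Continuous (H2 : (α → ℝ) → ℝ) := by
  have hlogb : Continuous fun x : ℝ => x * Real.logb 2 x := by
    simpa only [Real.logb, mul_div_assoc] using Real.continuous_mul_log.div_const (Real.log 2)
  exact (continuous_finsetSum _ fun a _ => hlogb.comp (continuous_apply a)).neg

theorem continuous_condMI : Continuous (condMI : (α × β × γ → ℝ) → ℝ) := by
  unfold condMI
  refine ((Continuous.add ?_ ?_).sub continuous_H2).sub ?_ <;>
    exact continuous_H2.comp (by fun_prop)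

/-- Compactness of the set of test channels makes `condRD` right-continuous in the distortion. -/
theorem condRD_le_of_forall_pos (hq : IsPmf q) (h : Feasible (margX q) δ d)
    (hr : ∀ ε > 0, condRD q δ (d + ε) ≤ r + ε) : condRD q δ d ≤ r := by
  have hchannel : Continuous (channelLaw q : (α × β → γ → ℝ) → α × β × γ → ℝ) := by
    unfold channelLaw
    fun_prop
  let excess (W : α × β → γ → ℝ) : ℝ :=
    max (expectedDistortion δ (channelLaw q W) - d) (condMI (channelLaw q W) - r)
  have hexcess : Continuous excess := by
    have hI := continuous_condMI.comp hchannel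
    have hd : Continuous fun W => expectedDistortion δ (channelLaw q W) := by
      unfold expectedDistortion
      fun_prop
    exact (hd.sub continuous_const).max (hI.sub continuous_const)
  obtain ⟨W₀, hW₀, -⟩ := h.exists_channel
  obtain ⟨W, hW, hmin⟩ := isCompact_setOf_isCondPmf.exists_isMinOn ⟨W₀, hW₀⟩ hexcess.continuousOn
  have hW0 : excess W ≤ 0 := le_of_forall_pos_le_add fun ε hε => by
    obtain ⟨W', hW', hd', hI'⟩ := exists_channel_condMI_lt (h.mono (by linarith))
      ((hr (ε / 2) (half_pos hε)).trans_lt (by linarith : r + ε / 2 < r + ε))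
    exact (hmin hW').trans (max_le (by linarith) (by linarith))
  obtain ⟨hd, hI⟩ := max_le_iff.1 hW0
  exact (condRD_le_condMI_channelLaw hq hW (by linarith)).trans (by linarith)

end ConditionalRateDistortion

section CommonPart

variable {α β γ κ τ : Type}

/-- `u X = v Y` almost surely, and `X`, `Y` are conditionally independent given this common part. -/
structure CondIndepGivenCommon [Fintype α] [Fintype β] (q : α × β → ℝ) (u : α → κ) (v : β → κ) :
    Prop where
  isPmf : IsPmf q
  eq_zero_of_ne {x : α} {y : β} : u x ≠ v y → q (x, y) = 0
  mul_eq {x : α} {y : β} :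
    u x = v y → q (x, y) * pushforward u (margX q) (v y) = margX q x * margY q y

/-- The joint law of `(X, u X)` when `X` has law `p`. -/
def graphLaw (p : α → ℝ) (u : α → κ) : α × κ → ℝ := fun t => if u t.1 = t.2 then p t.1 else 0

theorem margX_graphLaw [Fintype κ] (p : α → ℝ) (u : α → κ) : margX (graphLaw p u) = p := by
  ext x
  simp [margX, graphLaw]

theorem margY_graphLaw [Fintype α] (p : α → ℝ) (u : α → κ) :
    margY (graphLaw p u) = pushforward u p := rfl

theorem IsPmf.margX [Fintype α] [Fintype β] {q : α × β → ℝ} (hq : IsPmf q) : IsPmf (margX q) :=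
  ⟨fun _ => Finset.sum_nonneg fun _ _ => hq.1 _, by
    simp only [TWR.margX, ← Fintype.sum_prod_type, hq.2]⟩

theorem sum_graphLaw_mul [Fintype α] [Fintype κ] (p : α → ℝ) (u : α → κ) (F : α × κ → ℝ) :
    ∑ t, graphLaw p u t * F t = ∑ x, p x * F (x, u x) := by
  simp [Fintype.sum_prod_type, graphLaw]

theorem condIndepGivenCommon_graphLaw [Fintype α] [Fintype κ] {p : α → ℝ} (hp : IsPmf p)
    (u : α → κ) : CondIndepGivenCommon (graphLaw p u) u id where
  isPmf := ⟨fun t => ite_nonneg (hp.1 _) le_rfl, by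
    simpa only [mul_one, hp.2] using sum_graphLaw_mul p u fun _ => 1⟩
  eq_zero_of_ne h := if_neg h
  mul_eq h := by
    rw [margX_graphLaw, margY_graphLaw, id_eq]
    exact congrArg (· * _) (if_pos h)

namespace CondIndepGivenCommon

variable [Fintype α] [Fintype β] {q : α × β → ℝ} {u : α → κ} {v : β → κ}

theorem pushforward_row (h : CondIndepGivenCommon q u v) (x : α) :
    pushforward v (fun y => q (x, y)) = fun k => graphLaw (margX q) u (x, k) := by
  ext k
  simp only [pushforward, graphLaw, margX]
  split_ifs with hk
  · refine Finset.sum_congr rfl fun y _ => ?_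
    split_ifs with hy
    · rfl
    · exact (h.eq_zero_of_ne fun huv => hy (huv ▸ hk)).symm
  · refine Finset.sum_eq_zero fun y _ => ?_
    split_ifs with hy
    · exact h.eq_zero_of_ne fun huv => hk (huv ▸ hy)
    · rfl

theorem pushforward_margX (h : CondIndepGivenCommon q u v) :
    pushforward u (margX q) = pushforward v (margY q) := by
  ext k
  calc pushforward u (margX q) k = ∑ x, pushforward v (fun y => q (x, y)) k := by
        simp only [h.pushforward_row]; rfl
    _ = pushforward v (margY q) k := by
        simp only [pushforward, margY]
        rw [Finset.sum_comm]
        refine Finset.sum_congr rfl fun y _ => ?_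
        split_ifs
        · rfl
        · exact Finset.sum_const_zero

theorem swap (h : CondIndepGivenCommon q u v) : CondIndepGivenCommon (swap q) v u where
  isPmf := ⟨fun _ => h.isPmf.1 _, by
    rw [← h.isPmf.2, Fintype.sum_prod_type, Fintype.sum_prod_type_right]; rfl⟩
  eq_zero_of_ne hne := h.eq_zero_of_ne hne.symm
  mul_eq {y x} heq := by
    have := h.mul_eq heq.symm
    rw [h.pushforward_margX, mul_comm (margX q x)] at this
    rw [← heq]
    exact this

theorem mul_pushforward_margX (h : CondIndepGivenCommon q u v) (x : α) (y : β) :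
    q (x, y) * pushforward u (margX q) (v y) = graphLaw (margX q) u (x, v y) * margY q y := by
  simp only [graphLaw]
  split_ifs with huv
  · exact h.mul_eq huv
  · rw [h.eq_zero_of_ne huv, zero_mul, zero_mul]

end CondIndepGivenCommon
end CommonPart

section SingleLetter

variable {α β γ κ τ β' γ' : Type} [Fintype α] [Fintype β] [Fintype γ]

theorem margAB_pushforward [Fintype γ'] (P : α × β × γ → ℝ) (f : β → β') (g : β × γ → γ') (a : α) :
    margAB (pushforward (fun t => (t.1, f t.2.1, g t.2)) P) a = pushforward f (margAB P a) := by
  ext b'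
  calc margAB (pushforward (fun t => (t.1, f t.2.1, g t.2)) P) a b'
      = ∑ t : α × β × γ, if t.1 = a then (if f t.2.1 = b' then P t else 0) else 0 := by
        unfold margAB pushforward
        rw [Finset.sum_comm]
        simp only [Prod.mk.injEq, ite_and, Finset.sum_ite_irrel, Finset.sum_ite_eq,
          Finset.mem_univ, if_true, Finset.sum_const_zero]
    _ = ∑ b, ∑ c, if f b = b' then P (a, b, c) else 0 := by
        rw [sum_triple, Fintype.sum_eq_single a fun a' ha => by simp only [ha, if_false,
          Finset.sum_const_zero]]
        simp only [if_true]
    _ = pushforward f (margAB P a) b' := Finset.sum_congr rfl fun b _ => by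
        split_ifs
        · rfl
        · exact Finset.sum_const_zero

theorem expectedDistortion_pushforward [Fintype β'] [Fintype γ'] (δ : α → γ' → ℝ)
    (P : α × β × γ → ℝ) (f : β → β') (g : β × γ → γ') :
    expectedDistortion δ (pushforward (fun t => (t.1, f t.2.1, g t.2)) P)
      = ∑ t, P t * δ t.1 (g t.2) :=
  sum_pushforward_mul _ P fun t : α × β' × γ' => δ t.1 t.2.2

theorem condRD_le_condMI_of_decoder [Fintype τ] {q : α × β → ℝ} {δ : α → τ → ℝ} {d : ℝ}
    {P : α × β × γ → ℝ} (hP : IsPmf P) (hPq : ∀ a b, margAB P a b = q (a, b)) (π : β × γ → τ)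
    (hd : ∑ t, P t * δ t.1 (π t.2) ≤ d) : condRD q δ d ≤ condMI P := by
  let P' := pushforward (fun t : α × β × γ => (t.1, t.2.1, π t.2)) P
  have hP' : ∀ a, margAB P' a = margAB P a := fun a =>
    (margAB_pushforward P id π a).trans <| by ext b; simp [pushforward]
  have hB : ∀ b, margB P' b = margB P b := fun b => by simp only [← sum_margAB, hP']
  calc condRD q δ d ≤ condMI P' := condRD_le_condMI (hP.pushforward _)
        (fun a b => by rw [hP', hPq])
        ((expectedDistortion_pushforward δ P id π).trans_le hd)
    _ ≤ condMI P := condMI_pushforward_le hP id π rfl fun a b => by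
        rw [hP', id_eq, hB]

theorem condRD_graphLaw_le [Fintype κ] {q : α × β → ℝ} {u : α → κ} {v : β → κ}
    (h : CondIndepGivenCommon q u v) {δ : α → γ → ℝ} {d : ℝ} (hd : Feasible (margX q) δ d) :
    condRD (graphLaw (margX q) u) δ d ≤ condRD q δ d := by
  refine le_condRD hd fun W hW hWd => ?_
  have hP := h.isPmf.channelLaw hW
  let P' := pushforward (fun t : α × β × γ => (t.1, v t.2.1, t.2.2)) (channelLaw q W)
  have hAB : ∀ a k, margAB P' a k = graphLaw (margX q) u (a, k) := fun a k => by
    rw [margAB_pushforward (channelLaw q W) v Prod.snd]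
    simp only [funext (margAB_channelLaw q hW a), h.pushforward_row]
  have hB : ∀ k, margB P' k = pushforward u (margX q) k := fun k => by
    simp only [← sum_margAB, hAB]; rfl
  calc condRD (graphLaw (margX q) u) δ d ≤ condMI P' :=
        condRD_le_condMI (hP.pushforward _) hAB
          ((expectedDistortion_pushforward δ _ v Prod.snd).trans_le hWd)
    _ ≤ condMI (channelLaw q W) := condMI_pushforward_le hP v Prod.snd rfl fun a b => by
        rw [hAB, hB, margAB_channelLaw q hW, h.mul_pushforward_margX, ← sum_margAB]
        simp only [margAB_channelLaw q hW]; rfl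

end SingleLetter

section SupportReduction

/-- Move the weights along the relation `g` until the first of them vanishes. -/
theorem exists_add_mul_nonneg {γ : Type} [Finite γ] {l g : γ → ℝ} (hl : ∀ c, 0 ≤ l c)
    (hgl : ∀ c, g c ≠ 0 → l c ≠ 0) (hg : ∃ c, g c < 0) :
    ∃ t : ℝ, 0 ≤ t ∧ (∀ c, 0 ≤ l c + t * g c) ∧ ∃ c, l c ≠ 0 ∧ l c + t * g c = 0 := by
  obtain ⟨c₀, hc₀, hmin⟩ := Set.exists_min_image {c | g c < 0} (fun c => l c / -g c)
    (Set.toFinite _) hg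
  replace hc₀ : g c₀ < 0 := hc₀
  have ht : 0 ≤ l c₀ / -g c₀ := div_nonneg (hl c₀) (by linarith)
  refine ⟨l c₀ / -g c₀, ht, fun c => ?_, c₀, hgl c₀ hc₀.ne, by
    rw [div_neg, neg_mul, div_mul_cancel₀ _ hc₀.ne, add_neg_cancel]⟩
  rcases lt_or_ge (g c) 0 with h | h
  · have := (le_div_iff₀ (by linarith)).1 (hmin c h)
    linarith
  · exact add_nonneg (hl c) (mul_nonneg ht h)

variable {γ V : Type} [Fintype γ] [AddCommGroup V] [Module ℝ V]

theorem exists_relation_cost_nonpos [Module.Finite ℝ V] (A : γ → V) (cost : γ → ℝ)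
    {s : Finset γ} (hs : Module.finrank ℝ V < s.card) :
    ∃ g : γ → ℝ, (∀ c, g c ≠ 0 → c ∈ s) ∧ ∑ c, g c • A c = 0 ∧ ∑ c, g c * cost c ≤ 0 ∧
      ∃ c, g c ≠ 0 := by
  have hdep : ¬LinearIndepOn ℝ A (s : Set γ) := fun h => by
    rw [← Fintype.card_coe s] at hs
    exact hs.not_ge h.fintype_card_le_finrank
  obtain ⟨f, hf, c, hc, hfc⟩ := not_linearIndepOn_finset_iff.1 hdep
  let g (c : γ) : ℝ := if c ∈ s then f c else 0
  have hg : ∀ c, g c ≠ 0 → c ∈ s := fun c h => by_contra fun hcs => h (if_neg hcs)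
  have hgA : ∑ c, g c • A c = 0 := by
    simpa only [g, ite_smul, zero_smul, Finset.sum_ite_mem, Finset.univ_inter] using hf
  have hgc : g c ≠ 0 := by simpa only [g, if_pos hc] using hfc
  rcases le_total (∑ c, g c * cost c) 0 with h | h
  · exact ⟨g, hg, hgA, h, c, hgc⟩
  · exact ⟨-g, fun c hc => hg c (neg_ne_zero.1 hc), by simp [hgA], by simpa using h, c,
      neg_ne_zero.2 hgc⟩

theorem exists_smaller_support [Module.Finite ℝ V] (A : γ → V) (cost : γ → ℝ) (φ : V →ₗ[ℝ] ℝ)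
    {l : γ → ℝ} (hl : ∀ c, 0 ≤ l c) (hφ : ∀ c, l c ≠ 0 → 0 < φ (A c))
    (hcard : Module.finrank ℝ V < (Finset.univ.filter fun c => l c ≠ 0).card) :
    ∃ l' : γ → ℝ, (∀ c, 0 ≤ l' c) ∧ (∀ c, l' c ≠ 0 → l c ≠ 0) ∧ (∃ c, l c ≠ 0 ∧ l' c = 0) ∧
      ∑ c, l' c • A c = ∑ c, l c • A c ∧ ∑ c, l' c * cost c ≤ ∑ c, l c * cost c := by
  obtain ⟨g, hgl, hgA, hgcost, c₁, hc₁⟩ := exists_relation_cost_nonpos A cost hcard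
  replace hgl : ∀ c, g c ≠ 0 → l c ≠ 0 := fun c hc => (Finset.mem_filter_univ c).1 (hgl c hc)
  have hneg : ∃ c, g c < 0 := by
    by_contra! hg
    have hsum : ∑ c, g c * φ (A c) = 0 := by
      simpa only [map_sum, map_smul, smul_eq_mul, map_zero] using congrArg φ hgA
    have hterm : ∀ c, 0 ≤ g c * φ (A c) := fun c => by
      rcases eq_or_ne (g c) 0 with h | h
      · simp [h]
      · exact mul_nonneg (hg c) (hφ c (hgl c h)).le
    rcases mul_eq_zero.1 ((Fintype.sum_eq_zero_iff_of_nonneg hterm).1 hsum |> congrFun <| c₁)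
      with h | h
    · exact hc₁ h
    · exact (hφ c₁ (hgl c₁ hc₁)).ne' h
  obtain ⟨t, ht, hnn, c₂, hc₂, hzero⟩ := exists_add_mul_nonneg hl hgl hneg
  refine ⟨fun c => l c + t * g c, hnn, fun c hc hlc => ?_, ⟨c₂, hc₂, hzero⟩, ?_, ?_⟩
  · exact hgl c (fun h => hc (by simp [hlc, h])) hlc
  · simp only [add_smul, mul_smul, Finset.sum_add_distrib, ← Finset.smul_sum, hgA, smul_zero,
      add_zero]
  · simp only [add_mul, mul_assoc, Finset.sum_add_distrib, ← Finset.mul_sum]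
    linarith [mul_nonpos_of_nonneg_of_nonpos ht hgcost]

theorem exists_support_card_le_finrank [Module.Finite ℝ V] (A : γ → V) (cost : γ → ℝ)
    (φ : V →ₗ[ℝ] ℝ) (l : γ → ℝ) (hl : ∀ c, 0 ≤ l c) (hφ : ∀ c, l c ≠ 0 → 0 < φ (A c)) :
    ∃ l' : γ → ℝ, (∀ c, 0 ≤ l' c) ∧
      (Finset.univ.filter fun c => l' c ≠ 0).card ≤ Module.finrank ℝ V ∧
      ∑ c, l' c • A c = ∑ c, l c • A c ∧ ∑ c, l' c * cost c ≤ ∑ c, l c * cost c := by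
  induction hn : (Finset.univ.filter fun c => l c ≠ 0).card using Nat.strong_induction_on
    generalizing l with
  | _ n ih =>
    rcases le_or_gt n (Module.finrank ℝ V) with h | h
    · exact ⟨l, hl, hn.trans_le h, rfl, le_rfl⟩
    obtain ⟨l₁, hl₁, hsub, ⟨c, hc, hc₁⟩, hA, hcost⟩ :=
      exists_smaller_support A cost φ hl hφ (hn ▸ h)
    have hlt : (Finset.univ.filter fun c => l₁ c ≠ 0).card < n := by
      rw [← hn]
      refine Finset.card_lt_card (Finset.ssubset_iff_of_subset
        (Finset.monotone_filter_right _ fun c _ => hsub c) |>.2 ⟨c, ?_, ?_⟩)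
      · exact (Finset.mem_filter_univ c).2 hc
      · simp [hc₁]
    obtain ⟨l', hl', hcard, hA', hcost'⟩ := ih _ hlt l₁ hl₁ (fun c hc => hφ c (hsub c hc)) rfl
    exact ⟨l', hl', hcard, hA'.trans hA, hcost'.trans hcost⟩

theorem exists_fin_reindex [Nonempty γ] {l : γ → ℝ} (hl : ∀ c, 0 ≤ l c) {N : ℕ}
    (hN : (Finset.univ.filter fun c => l c ≠ 0).card ≤ N) (F : γ → V) :
    ∃ (s : Fin N → ℝ) (j : Fin N → γ), (∀ i, 0 ≤ s i) ∧
      ∑ i, s i • F (j i) = ∑ c, l c • F c := by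
  obtain ⟨e⟩ : Nonempty ({c // l c ≠ 0} ↪ Fin N) :=
    Function.Embedding.nonempty_of_card_le (by simpa [Fintype.card_subtype] using hN)
  refine ⟨Function.extend e (fun c => l c) 0, Function.extend e Subtype.val Classical.ofNonempty,
    fun i => ?_, ?_⟩
  · by_cases hi : ∃ c, e c = i
    · obtain ⟨c, rfl⟩ := hi
      rw [e.injective.extend_apply]
      exact hl c
    · rw [Function.extend_apply' _ _ _ hi, Pi.zero_apply]
  · calc _ = ∑ c : {c // l c ≠ 0}, l c • F c := by
          refine (Fintype.sum_of_injective e e.injective _ _ (fun i hi => ?_) fun c => ?_).symm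
          · rw [Function.extend_apply' _ _ _ hi, Pi.zero_apply, zero_smul]
          · rw [e.injective.extend_apply, e.injective.extend_apply]
      _ = ∑ c, l c • F c := by
          refine Fintype.sum_of_injective Subtype.val Subtype.val_injective _ _ (fun c hc => ?_)
            fun c => rfl
          have : l c = 0 := by simpa using hc
          rw [this, zero_smul]

theorem exists_fin_weights [Nonempty γ] [Module.Finite ℝ V] (A : γ → V) (cost : γ → ℝ)
    (φ : V →ₗ[ℝ] ℝ) (hφ : ∀ c, 0 < φ (A c) ∨ A c = 0 ∧ cost c = 0) :
    ∃ (s : Fin (Module.finrank ℝ V) → ℝ) (j : Fin (Module.finrank ℝ V) → γ), (∀ i, 0 ≤ s i) ∧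
      ∑ i, s i • A (j i) = ∑ c, A c ∧ ∑ i, s i * cost (j i) ≤ ∑ c, cost c := by
  let l (c : γ) : ℝ := if 0 < φ (A c) then 1 else 0
  have hl : ∀ c, l c • A c = A c ∧ l c * cost c = cost c := fun c => by
    rcases hφ c with h | ⟨hA, hcost⟩
    · simp [l, h]
    · simp [hA, hcost]
  obtain ⟨l', hl', hcard, hA, hcost⟩ := exists_support_card_le_finrank A cost φ l
    (fun c => by positivity) fun c hc => by_contra fun h => hc (if_neg h)
  obtain ⟨s, j, hs, hsum⟩ := exists_fin_reindex hl' hcard fun c => (A c, cost c)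
  simp only [Prod.smul_mk, smul_eq_mul, Prod.ext_iff, Prod.fst_sum, Prod.snd_sum] at hsum
  simp only [fun c => (hl c).1, fun c => (hl c).2] at hA hcost
  exact ⟨s, j, hs, hsum.1.trans hA, hsum.2.trans_le hcost⟩

end SupportReduction

section WynerZiv

variable {α β γ κ : Type} [Fintype α]

/-- The contribution of a single output letter to `I(X; C | u X)`: here `p` is the law of `X` and
`w x` is the probability that `C` takes the letter in question given `X = x`. It is positively
homogeneous in `w`. -/
def letterInfo (p : α → ℝ) (u : α → κ) (w : α → ℝ) : ℝ :=
  ∑ x, p x * w x * (Real.logb 2 (w x) + Real.logb 2 (pushforward u p (u x))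
    - Real.logb 2 (pushforward u (fun x' => p x' * w x') (u x)))

theorem letterInfo_smul {p : α → ℝ} (hp : ∀ x, 0 ≤ p x) (u : α → κ) {w : α → ℝ}
    (hw : ∀ x, 0 ≤ w x) (s : ℝ) :
    letterInfo p u (fun x => s * w x) = s * letterInfo p u w := by
  rw [letterInfo, letterInfo, Finset.mul_sum]
  refine Finset.sum_congr rfl fun x _ => ?_
  have hpush : pushforward u (fun x' => p x' * (s * w x')) (u x)
      = s * pushforward u (fun x' => p x' * w x') (u x) := by
    simp only [pushforward, Finset.mul_sum, mul_ite, mul_zero, mul_left_comm]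
  rcases eq_or_ne s 0 with hs | hs
  · simp only [hs, zero_mul, mul_zero]
  rcases (mul_nonneg (hp x) (hw x)).eq_or_lt with h | h
  · rw [mul_left_comm, ← h, mul_zero, zero_mul, zero_mul, mul_zero]
  · have hpos := h.trans_le
      (le_pushforward (fun x' => mul_nonneg (hp x') (hw x')) u x)
    rw [hpush, Real.logb_mul hs (right_ne_zero_of_mul h.ne'), Real.logb_mul hs hpos.ne']
    ring

variable [Fintype β] {q : α × β → ℝ} {u : α → κ} {v : β → κ}

theorem CondIndepGivenCommon.margBC_channelLaw_mul (h : CondIndepGivenCommon q u v)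
    (a : α → γ → ℝ) (y : β) (c : γ) :
    margBC (channelLaw q fun t => a t.1) y c * pushforward u (margX q) (v y)
      = margY q y * pushforward u (fun x => margX q x * a x c) (v y) := by
  rw [margBC, pushforward.eq_def u fun x => margX q x * a x c, Finset.sum_mul, Finset.mul_sum]
  refine Finset.sum_congr rfl fun x _ => ?_
  simp only [channelLaw]
  rw [mul_right_comm, h.mul_pushforward_margX, graphLaw]
  split_ifs <;> ring

section FiniteOutput

variable [Fintype γ]

theorem CondIndepGivenCommon.logb_margBC_channelLaw (h : CondIndepGivenCommon q u v)
    {a : α → γ → ℝ} (ha : IsCondPmf a) {x : α} {y : β} {c : γ}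
    (hpos : 0 < channelLaw q (fun t => a t.1) (x, y, c)) :
    Real.logb 2 (margBC (channelLaw q fun t => a t.1) y c)
      = Real.logb 2 (margY q y) + Real.logb 2 (pushforward u (fun x' => margX q x' * a x' c) (u x))
        - Real.logb 2 (pushforward u (margX q) (u x)) := by
  have hP : IsPmf (channelLaw q fun t => a t.1) := h.isPmf.channelLaw fun t => ha t.1
  have hq : q (x, y) ≠ 0 := left_ne_zero_of_mul hpos.ne'
  have huv : u x = v y := by_contra fun hne => hq (h.eq_zero_of_ne hne)
  have hBC : margBC (channelLaw q fun t => a t.1) y c ≠ 0 :=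
    (hpos.trans_le (le_margBC hP.1 (x, y, c))).ne'
  have hU : pushforward u (margX q) (v y) ≠ 0 := by
    have hX : 0 < margX q x := ((h.isPmf.1 _).lt_of_ne' hq).trans_le <|
      Finset.single_le_sum (f := fun y => q (x, y)) (fun _ _ => h.isPmf.1 _) (Finset.mem_univ y)
    exact huv ▸ (hX.trans_le (le_pushforward h.isPmf.margX.1 u x)).ne'
  have hmul := h.margBC_channelLaw_mul a y c
  have hYS := hmul ▸ mul_ne_zero hBC hU
  replace hmul := congrArg (Real.logb 2) hmul
  rw [Real.logb_mul hBC hU,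
    Real.logb_mul (left_ne_zero_of_mul hYS) (right_ne_zero_of_mul hYS)] at hmul
  rw [huv]
  linarith

theorem CondIndepGivenCommon.condMI_channelLaw (h : CondIndepGivenCommon q u v) {a : α → γ → ℝ}
    (ha : IsCondPmf a) :
    condMI (channelLaw q fun t => a t.1) = ∑ c, letterInfo (margX q) u fun x => a x c := by
  set P := channelLaw q fun t => a t.1 with hPdef
  have hP : IsPmf P := h.isPmf.channelLaw fun t => ha t.1
  have hAB : ∀ x y, margAB P x y = q (x, y) := margAB_channelLaw q fun t => ha t.1
  have hB : ∀ y, margB P y = margY q y := fun y => Finset.sum_congr rfl fun x _ => hAB x y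
  calc condMI P = ∑ t, P t * (Real.logb 2 (a t.1 t.2.2)
          + Real.logb 2 (pushforward u (margX q) (u t.1))
          - Real.logb 2 (pushforward u (fun x => margX q x * a x t.2.2) (u t.1))) := by
        rw [condMI_eq_sum]
        refine Finset.sum_congr rfl fun ⟨x, y, c⟩ _ => ?_
        rcases (hP.1 (x, y, c)).eq_or_lt with h0 | h0
        · rw [← h0, zero_mul, zero_mul]
        have hPt : Real.logb 2 (P (x, y, c)) = Real.logb 2 (q (x, y)) + Real.logb 2 (a x c) :=
          Real.logb_mul (left_ne_zero_of_mul h0.ne') (right_ne_zero_of_mul h0.ne')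
        rw [hPt, hB, hAB, h.logb_margBC_channelLaw ha h0]
        ring
    _ = ∑ x, ∑ c, ∑ y, P (x, y, c) * (Real.logb 2 (a x c)
          + Real.logb 2 (pushforward u (margX q) (u x))
          - Real.logb 2 (pushforward u (fun x => margX q x * a x c) (u x))) := by
        rw [sum_triple]
        exact Finset.sum_congr rfl fun x _ => Finset.sum_comm
    _ = ∑ c, letterInfo (margX q) u fun x => a x c := by
        rw [Finset.sum_comm]
        simp only [letterInfo, margX, Finset.sum_mul, hPdef, channelLaw]

theorem exists_fin_channel {p : α → ℝ} (hp : ∀ x, 0 ≤ p x) (u : α → κ) (δ : α → γ → ℝ)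
    {w : α → γ → ℝ} (hw : IsCondPmf w) [Nonempty γ] :
    ∃ (a : α → Fin (Fintype.card α + 1) → ℝ) (π : Fin (Fintype.card α + 1) → γ), IsCondPmf a ∧
      ∑ i, ∑ x, p x * a x i * δ x (π i) = ∑ c, ∑ x, p x * w x c * δ x c ∧
      ∑ i, letterInfo p u (fun x => a x i) ≤ ∑ c, letterInfo p u fun x => w x c := by
  let A (c : γ) : (α → ℝ) × ℝ := (fun x => w x c, ∑ x, p x * w x c * δ x c)
  let φ : (α → ℝ) × ℝ →ₗ[ℝ] ℝ := (∑ x, LinearMap.proj x) ∘ₗ LinearMap.fst ℝ _ _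
  have hφ : ∀ c, 0 < φ (A c) ∨ A c = 0 ∧ letterInfo p u (fun x => w x c) = 0 := fun c => by
    have hφA : φ (A c) = ∑ x, w x c := by simp [φ, A]
    rcases (Finset.sum_nonneg fun x _ => (hw x).1 c).eq_or_lt with h | h
    · have hwc := (Fintype.sum_eq_zero_iff_of_nonneg fun x => (hw x).1 c).1 h.symm
      have hwx : ∀ x, w x c = 0 := congrFun hwc
      right
      simp only [A, letterInfo, hwx, mul_zero, zero_mul, Finset.sum_const_zero]
      exact ⟨rfl, trivial⟩
    · exact Or.inl (hφA ▸ h)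
  have hrank : Module.finrank ℝ ((α → ℝ) × ℝ) = Fintype.card α + 1 := by simp
  obtain ⟨s, j, hs, hA, hcost⟩ := hrank ▸
    exists_fin_weights A (fun c => letterInfo p u fun x => w x c) φ hφ
  simp only [A, Prod.ext_iff, Prod.fst_sum, Prod.snd_sum, Prod.smul_mk, funext_iff,
    Finset.sum_apply, Pi.smul_apply, smul_eq_mul] at hA
  refine ⟨fun x i => s i * w x (j i), j,
    fun x => ⟨fun i => mul_nonneg (hs i) ((hw x).1 _), (hA.1 x).trans (hw x).2⟩, ?_, ?_⟩
  · simp only [← hA.2, Finset.mul_sum]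
    exact Finset.sum_congr rfl fun i _ => Finset.sum_congr rfl fun x _ => by ring
  · simpa only [letterInfo_smul hp u fun x => (hw x).1 _] using hcost

end FiniteOutput

variable {δ : α → γ → ℝ} {d : ℝ}

/-- A joint law of `(A, X, Y)` over which the Wyner-Ziv rate is minimised. -/
def IsWynerZivLaw (q : α × β → ℝ) (δ : α → γ → ℝ) (d : ℝ)
    (p : Fin (Fintype.card α + 1) × α × β → ℝ) : Prop :=
  IsPmf p ∧ (∀ x y, ∑ i, p (i, x, y) = q (x, y)) ∧ Markov p ∧
    ∃ π : Fin (Fintype.card α + 1) × β → γ, ∑ i, ∑ x, ∑ y, p (i, x, y) * δ x (π (i, y)) ≤ d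

/-- The law of `(X, Y, A)` when `(A, X, Y)` has law `p`. -/
def rotate (p : γ × α × β → ℝ) : α × β × γ → ℝ := fun t => p (t.2.2, t.1, t.2.1)

theorem sum_rotate_mul [Fintype γ] (p : γ × α × β → ℝ) (F : α × β × γ → ℝ) :
    ∑ t, rotate p t * F t = ∑ c, ∑ a, ∑ b, p (c, a, b) * F (a, b, c) := by
  rw [sum_triple, Finset.sum_comm]
  simp only [rotate]
  rw [Finset.sum_congr rfl fun b _ => Finset.sum_comm]
  rw [Finset.sum_comm]
  exact Finset.sum_congr rfl fun c _ => Finset.sum_comm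

theorem IsPmf.rotate [Fintype γ] {p : γ × α × β → ℝ} (hp : IsPmf p) : IsPmf (rotate p) :=
  ⟨fun _ => hp.1 _, by
    have hsum := sum_rotate_mul p fun _ => 1
    simp only [mul_one] at hsum
    rw [hsum, ← hp.2, sum_triple]⟩

theorem wzRD_le_condMI_rotate {p : Fin (Fintype.card α + 1) × α × β → ℝ}
    (hp : IsWynerZivLaw q δ d p) : wzRD q δ d ≤ condMI (rotate p) := by
  obtain ⟨hpmf, hpq, hmarkov, hπ⟩ := hp
  refine csInf_le ⟨0, ?_⟩ ⟨p, hpmf, hpq, hmarkov, hπ, rfl⟩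
  rintro _ ⟨p, hp, -, -, -, rfl⟩
  exact condMI_nonneg hp.rotate

theorem condRD_le_condMI_rotate [Fintype γ] {p : Fin (Fintype.card α + 1) × α × β → ℝ}
    (hp : IsWynerZivLaw q δ d p) : condRD q δ d ≤ condMI (rotate p) := by
  obtain ⟨hpmf, hpq, -, π, hπ⟩ := hp
  refine condRD_le_condMI_of_decoder hpmf.rotate hpq (fun t => π t.swap) ?_
  rwa [sum_rotate_mul p fun t => δ t.1 (π t.2.swap)]

theorem exists_isWynerZivLaw_of_channel (hq : IsPmf q)
    {a : α → Fin (Fintype.card α + 1) → ℝ} (ha : IsCondPmf a)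
    (π : Fin (Fintype.card α + 1) → γ) (hd : ∑ i, ∑ x, margX q x * a x i * δ x (π i) ≤ d) :
    ∃ p, IsWynerZivLaw q δ d p ∧ rotate p = channelLaw q fun t => a t.1 := by
  let p (t : Fin (Fintype.card α + 1) × α × β) : ℝ := q t.2 * a t.2.1 t.1
  have hpq : ∀ x y, ∑ i, p (i, x, y) = q (x, y) := fun x y => by
    simp only [p, ← Finset.mul_sum, (ha x).2, mul_one]
  have hpY : ∀ i x, ∑ y, p (i, x, y) = margX q x * a x i := fun i x => by
    simp only [p, ← Finset.sum_mul, margX]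
  refine ⟨p, ⟨⟨fun t => mul_nonneg (hq.1 _) ((ha _).1 _), ?_⟩, hpq, ?_, fun t => π t.1, ?_⟩, rfl⟩
  · rw [Fintype.sum_prod_type_right]
    exact (Finset.sum_congr rfl fun t _ => hpq t.1 t.2).trans hq.2
  · intro i x y
    rw [hpY, hpq]
    simp only [hpY, ← Finset.mul_sum, (ha x).2, p]
    ring
  · simpa only [← Finset.sum_mul, hpY] using hd

theorem Feasible.exists_isWynerZivLaw (hq : IsPmf q) (hd : Feasible (margX q) δ d) :
    ∃ p, IsWynerZivLaw q δ d p := by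
  obtain ⟨⟨x₀, -⟩, -⟩ := hq.exists_pos
  obtain ⟨g, hg⟩ := hd
  let e (x : α) : Fin (Fintype.card α + 1) := (Fintype.equivFin α x).castSucc
  have he : Function.Injective e :=
    (Fin.castSucc_injective _).comp (Fintype.equivFin α).injective
  have he_pmf : IsCondPmf fun x i => if i = e x then (1 : ℝ) else 0 :=
    fun x => ⟨fun i => by positivity, by simp⟩
  obtain ⟨p, hp, -⟩ := exists_isWynerZivLaw_of_channel (δ := δ) (d := d) hq he_pmf
    (Function.extend e g fun _ => g x₀) (by
      rw [Finset.sum_comm]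
      simpa [he.extend_apply] using hg)
  exact ⟨p, hp⟩

variable [Fintype γ]

theorem condRD_le_wzRD (hq : IsPmf q) (hd : Feasible (margX q) δ d) :
    condRD q δ d ≤ wzRD q δ d := by
  obtain ⟨p, hpmf, hpq, hmarkov, hπ⟩ := hd.exists_isWynerZivLaw hq
  refine le_csInf ⟨_, p, hpmf, hpq, hmarkov, hπ, rfl⟩ ?_
  rintro _ ⟨p, hpmf, hpq, hmarkov, hπ, rfl⟩
  exact condRD_le_condMI_rotate ⟨hpmf, hpq, hmarkov, hπ⟩

variable [Fintype κ]

theorem CondIndepGivenCommon.exists_isWynerZivLaw_condMI_le (h : CondIndepGivenCommon q u v)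
    {W : α × κ → γ → ℝ} (hW : IsCondPmf W)
    (hd : expectedDistortion δ (channelLaw (graphLaw (margX q) u) W) ≤ d) :
    ∃ p, IsWynerZivLaw q δ d p ∧
      condMI (rotate p) ≤ condMI (channelLaw (graphLaw (margX q) u) W) := by
  have hX := h.isPmf.margX
  obtain ⟨x₀, -⟩ := hX.exists_pos
  obtain ⟨c₀, -⟩ := (hW (x₀, u x₀)).exists_pos
  have : Nonempty γ := ⟨c₀⟩
  let w (x : α) : γ → ℝ := W (x, u x)
  have hw : IsCondPmf w := fun x => hW _
  have hWw : channelLaw (graphLaw (margX q) u) W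
      = channelLaw (graphLaw (margX q) u) fun t => w t.1 := by
    ext ⟨x, k, c⟩
    simp only [channelLaw, graphLaw, w]
    split_ifs with hk
    · rw [hk]
    · rw [zero_mul, zero_mul]
  have hdw : ∑ c, ∑ x, margX q x * w x c * δ x c ≤ d := by
    rw [expectedDistortion_channelLaw, sum_graphLaw_mul] at hd
    rw [Finset.sum_comm]
    simpa only [mul_assoc, Finset.mul_sum] using hd
  obtain ⟨a, π, ha, had, hainfo⟩ := exists_fin_channel hX.1 u δ hw
  obtain ⟨p, hp, hpa⟩ := exists_isWynerZivLaw_of_channel h.isPmf ha π (had.trans_le hdw)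
  refine ⟨p, hp, ?_⟩
  calc condMI (rotate p) = ∑ i, letterInfo (margX q) u fun x => a x i := by
        rw [hpa, h.condMI_channelLaw ha]
    _ ≤ ∑ c, letterInfo (margX q) u fun x => w x c := hainfo
    _ = condMI (channelLaw (graphLaw (margX q) u) W) := by
        rw [hWw, (condIndepGivenCommon_graphLaw hX u).condMI_channelLaw hw, margX_graphLaw]

theorem CondIndepGivenCommon.wzRD_le_condRD_graphLaw (h : CondIndepGivenCommon q u v)
    (hd : Feasible (margX q) δ d) : wzRD q δ d ≤ condRD (graphLaw (margX q) u) δ d := by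
  refine le_condRD (by rwa [margX_graphLaw]) fun W hW hWd => ?_
  obtain ⟨p, hp, hpW⟩ := h.exists_isWynerZivLaw_condMI_le hW hWd
  exact (wzRD_le_condMI_rotate hp).trans hpW

theorem CondIndepGivenCommon.condRD_eq_condRD_graphLaw (h : CondIndepGivenCommon q u v)
    (hd : Feasible (margX q) δ d) : condRD q δ d = condRD (graphLaw (margX q) u) δ d :=
  ((condRD_le_wzRD h.isPmf hd).trans (h.wzRD_le_condRD_graphLaw hd)).antisymm
    (condRD_graphLaw_le h hd)

theorem CondIndepGivenCommon.wzRD_eq_condRD_graphLaw (h : CondIndepGivenCommon q u v)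
    (hd : Feasible (margX q) δ d) : wzRD q δ d = condRD (graphLaw (margX q) u) δ d :=
  (h.wzRD_le_condRD_graphLaw hd).antisymm <|
    (condRD_graphLaw_le h hd).trans (condRD_le_wzRD h.isPmf hd)

end WynerZiv

section BlockLaws

variable {τ α β : Type} [Fintype τ] [Fintype α] [Fintype β] {n : ℕ}

/-- The law of `n` independent draws from `p`. -/
def blockLaw (p : τ → ℝ) (n : ℕ) : (Fin n → τ) → ℝ := fun t => ∏ i, p (t i)

theorem IsPmf.blockLaw {p : τ → ℝ} (hp : IsPmf p) (n : ℕ) : IsPmf (blockLaw p n) :=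
  ⟨fun _ => Finset.prod_nonneg fun _ _ => hp.1 _, by
    simp only [TWR.blockLaw, ← Fintype.prod_sum fun _ => p, hp.2, Finset.prod_const_one]⟩

theorem sum_blockLaw_mul_apply {p : τ → ℝ} (hp : IsPmf p) (i : Fin n) (F : τ → ℝ) :
    ∑ t, blockLaw p n t * F (t i) = ∑ a, p a * F a := by
  have hterm : ∀ t : Fin n → τ,
      blockLaw p n t * F (t i) = ∏ j, p (t j) * if j = i then F (t j) else 1 := fun t => by
    rw [Finset.prod_mul_distrib, Finset.prod_ite_eq' Finset.univ i, if_pos (Finset.mem_univ i)]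
    rfl
  simp only [hterm]
  rw [← Fintype.prod_sum fun j a => p a * if j = i then F a else 1,
    Fintype.prod_eq_single i fun j hj => by simp only [if_neg hj, mul_one, hp.2]]
  simp only [if_true]

theorem sum_iid_mul (q : α × β → ℝ) (F : (Fin n → α) × (Fin n → β) → ℝ) :
    ∑ xy, iid q n xy * F xy = ∑ t, blockLaw q n t * F (fun i => (t i).1, fun i => (t i).2) := by
  rw [← (Equiv.arrowProdEquivProdArrow (Fin n) (fun _ => α) (fun _ => β)).sum_comp]
  rfl

theorem isPmf_iid {q : α × β → ℝ} (hq : IsPmf q) (n : ℕ) : IsPmf (iid q n) :=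
  ⟨fun _ => Finset.prod_nonneg fun _ _ => hq.1 _, by
    simpa only [mul_one, (hq.blockLaw n).2] using sum_iid_mul (n := n) q fun _ => 1⟩

end BlockLaws

section Converse

variable {α β γ : Type} [Fintype α] [Fintype β] {q : α × β → ℝ} {n m : ℕ}

/-- The joint law of `(Xᵢ, Yᵢ, Cᵢ)` for a uniformly random position `i`, when the block of
reconstructions is `C = g (X, Y)`. -/
def letterLaw (q : α × β → ℝ) (g : (Fin n → α) × (Fin n → β) → Fin n → γ) : α × β × γ → ℝ :=
  pushforward (fun s : ((Fin n → α) × (Fin n → β)) × Fin n =>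
    (s.1.1 s.2, s.1.2 s.2, g s.1 s.2)) fun s => iid q n s.1 * (n : ℝ)⁻¹

theorem isPmf_letterLaw [Fintype γ] (hq : IsPmf q) (hn : n ≠ 0)
    (g : (Fin n → α) × (Fin n → β) → Fin n → γ) : IsPmf (letterLaw q g) := by
  refine IsPmf.pushforward ⟨fun s => mul_nonneg ((isPmf_iid hq n).1 _) (by positivity), ?_⟩ _
  rw [Fintype.sum_prod_type]
  simp only [Finset.sum_const, Finset.card_univ, Fintype.card_fin, nsmul_eq_mul,
    mul_left_comm (n : ℝ), mul_inv_cancel₀ (Nat.cast_ne_zero.2 hn : (n : ℝ) ≠ 0), mul_one,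
    (isPmf_iid hq n).2]

theorem sum_letterLaw_mul [Fintype γ] (q : α × β → ℝ) (g : (Fin n → α) × (Fin n → β) → Fin n → γ)
    (F : α × β × γ → ℝ) :
    ∑ t, letterLaw q g t * F t
      = ∑ xy, iid q n xy * ((n : ℝ)⁻¹ * ∑ i, F (xy.1 i, xy.2 i, g xy i)) := by
  rw [letterLaw, sum_pushforward_mul, Fintype.sum_prod_type]
  simp only [mul_assoc, Finset.mul_sum]

theorem margAB_letterLaw [Fintype γ] (hq : IsPmf q) (hn : n ≠ 0)
    (g : (Fin n → α) × (Fin n → β) → Fin n → γ) (a : α) (b : β) :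
    margAB (letterLaw q g) a b = q (a, b) := by
  have hn' : (n : ℝ) ≠ 0 := Nat.cast_ne_zero.2 hn
  calc margAB (letterLaw q g) a b
      = ∑ t, letterLaw q g t * if (t.1, t.2.1) = (a, b) then 1 else 0 := by
        rw [sum_triple, Fintype.sum_eq_single a fun a' ha => by simp [ha],
          Fintype.sum_eq_single b fun b' hb => by simp [hb]]
        simp [margAB]
    _ = ∑ i : Fin n, (n : ℝ)⁻¹ *
          ∑ t, blockLaw q n t * if t i = (a, b) then 1 else 0 := by
        rw [sum_letterLaw_mul, sum_iid_mul]
        simp only [Finset.mul_sum, Prod.mk.eta]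
        rw [Finset.sum_comm]
        simp only [mul_left_comm]
    _ = q (a, b) := by
        simp only [fun i : Fin n =>
          sum_blockLaw_mul_apply hq i fun t => if t = (a, b) then 1 else 0]
        simp [hn']

theorem sum_prod_posterior_le {p : β → ℝ} (hp : IsPmf p) {V : α × β × γ → ℝ} (hV : ∀ t, 0 ≤ V t)
    (hV1 : ∀ b c, ∑ a, V (a, b, c) ≤ 1) (f : (Fin n → α) × (Fin n → β) → Fin m)
    (g : Fin m × (Fin n → β) → Fin n → γ) :
    ∑ xy, ∏ i, (V (xy.1 i, xy.2 i, g (f xy, xy.2) i) * p (xy.2 i)) ≤ m := by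
  let T (k : Fin m) (xy : (Fin n → α) × (Fin n → β)) : ℝ :=
    ∏ i, (V (xy.1 i, xy.2 i, g (k, xy.2) i) * p (xy.2 i))
  have hT : ∀ k y, ∑ x, T k (x, y) ≤ blockLaw p n y := fun k y => by
    rw [← Fintype.prod_sum fun i a => V (a, y i, g (k, y) i) * p (y i)]
    refine Finset.prod_le_prod
      (fun i _ => Finset.sum_nonneg fun a _ => mul_nonneg (hV _) (hp.1 _)) fun i _ => ?_
    rw [← Finset.sum_mul]
    exact mul_le_of_le_one_left (hp.1 _) (hV1 _ _)
  calc ∑ xy, T (f xy) xy ≤ ∑ xy, ∑ k, T k xy := by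
        gcongr with xy
        exact Finset.single_le_sum (f := fun k => T k xy)
          (fun k _ => Finset.prod_nonneg fun i _ => mul_nonneg (hV _) (hp.1 _)) (Finset.mem_univ _)
    _ = ∑ k, ∑ y, ∑ x, T k (x, y) := by
        rw [Finset.sum_comm]
        simp only [Fintype.sum_prod_type_right]
    _ ≤ ∑ _k : Fin m, ∑ y, blockLaw p n y := by gcongr with k _ y _; exact hT k y
    _ = m := by simp [(hp.blockLaw n).2]

theorem letterLaw_pos (hq : IsPmf q) {g : (Fin n → α) × (Fin n → β) → Fin n → γ}
    {xy : (Fin n → α) × (Fin n → β)} (hxy : 0 < iid q n xy) (i : Fin n) :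
    0 < letterLaw q g (xy.1 i, xy.2 i, g xy i) :=
  (mul_pos hxy (inv_pos.2 (Nat.cast_pos.2 i.pos))).trans_le <|
    le_pushforward (p := fun s : ((Fin n → α) × (Fin n → β)) × Fin n => iid q n s.1 * (n : ℝ)⁻¹)
      (fun _ => mul_nonneg ((isPmf_iid hq n).1 _) (by positivity)) _ (xy, i)

theorem sum_logb_letterLaw [Fintype γ] (hq : IsPmf q)
    {g : (Fin n → α) × (Fin n → β) → Fin n → γ} {Q : α × β × γ → ℝ} (hQ : letterLaw q g = Q)
    {xy : (Fin n → α) × (Fin n → β)} (hxy : 0 < iid q n xy) :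
    ∑ i, (Real.logb 2 (Q (xy.1 i, xy.2 i, g xy i)) + Real.logb 2 (margB Q (xy.2 i))
      - Real.logb 2 (margAB Q (xy.1 i) (xy.2 i)) - Real.logb 2 (margBC Q (xy.2 i) (g xy i)))
    = Real.logb 2 ((∏ i, (posterior Q (xy.1 i, xy.2 i, g xy i) * margB Q (xy.2 i)))
      / iid q n xy) := by
  rcases eq_or_ne n 0 with rfl | hn
  · simp [iid]
  have hQ0 : ∀ t, 0 ≤ Q t := hQ ▸ (isPmf_letterLaw hq hn g).1
  have hpos : ∀ i, 0 < Q (xy.1 i, xy.2 i, g xy i) := fun i => hQ ▸ letterLaw_pos hq hxy i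
  have hV : ∀ i, posterior Q (xy.1 i, xy.2 i, g xy i) ≠ 0 := fun i =>
    (posterior_pos hQ0 (hpos i)).ne'
  have hB : ∀ i, margB Q (xy.2 i) ≠ 0 := fun i => ((hpos i).trans_le (le_margB hQ0 _)).ne'
  have hq0 : ∀ i, q (xy.1 i, xy.2 i) ≠ 0 := fun i =>
    Finset.prod_ne_zero_iff.1 hxy.ne' i (Finset.mem_univ i)
  rw [Real.logb_div (Finset.prod_ne_zero_iff.2 fun i _ => mul_ne_zero (hV i) (hB i)) hxy.ne', iid,
    Real.logb_prod _ _ fun i _ => mul_ne_zero (hV i) (hB i), Real.logb_prod _ _ fun i _ => hq0 i,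
    ← Finset.sum_sub_distrib]
  refine Finset.sum_congr rfl fun i _ => ?_
  rw [Real.logb_mul (hV i) (hB i), posterior, Real.logb_div (hpos i).ne'
    ((hpos i).trans_le (le_margBC hQ0 _)).ne', ← hQ, margAB_letterLaw hq hn]
  ring

theorem condMI_letterLaw_le [Fintype γ] (hq : IsPmf q) (hn : n ≠ 0)
    (f : (Fin n → α) × (Fin n → β) → Fin m) (g : Fin m × (Fin n → β) → Fin n → γ) :
    condMI (letterLaw q fun xy => g (f xy, xy.2)) ≤ Real.logb 2 m / n := by
  set Q := letterLaw q fun xy => g (f xy, xy.2) with hQdef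
  have hQ : IsPmf Q := isPmf_letterLaw hq hn _
  have hB : IsPmf (margB Q) := ⟨fun b => Finset.sum_nonneg fun _ _ =>
    Finset.sum_nonneg fun _ _ => hQ.1 _, (sum_margB Q).trans hQ.2⟩
  let T (xy : (Fin n → α) × (Fin n → β)) : ℝ :=
    ∏ i, (posterior Q (xy.1 i, xy.2 i, g (f xy, xy.2) i) * margB Q (xy.2 i))
  have hTpos : ∀ xy, 0 < iid q n xy → 0 < T xy := fun xy hxy =>
    Finset.prod_pos fun i _ => mul_pos (posterior_pos hQ.1 (letterLaw_pos hq hxy i))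
      ((letterLaw_pos hq hxy i).trans_le (le_margB hQ.1 _))
  calc condMI Q = (n : ℝ)⁻¹ * ∑ xy, iid q n xy * Real.logb 2 (T xy / iid q n xy) := by
        rw [condMI_eq_sum, sum_letterLaw_mul, Finset.mul_sum]
        refine Finset.sum_congr rfl fun xy _ => ?_
        rcases ((isPmf_iid hq n).1 xy).eq_or_lt with h0 | h0
        · simp only [← h0, zero_mul, mul_zero]
        · rw [← sum_logb_letterLaw hq hQdef.symm h0, mul_left_comm]
    _ ≤ (n : ℝ)⁻¹ * Real.logb 2 m := by
        gcongr
        exact sum_mul_logb_div_le (isPmf_iid hq n)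
          (fun xy => Finset.prod_nonneg fun i _ => mul_nonneg (posterior_nonneg hQ.1 _) (hB.1 _))
          hTpos (sum_prod_posterior_le hB (posterior_nonneg hQ.1) (sum_posterior_le_one Q) f g)
    _ = Real.logb 2 m / n := by rw [mul_comm, div_eq_mul_inv]

theorem condRD_Delta1_le [Fintype γ] (hq : IsPmf q) (hn : n ≠ 0) {δ : α → γ → ℝ} {d : ℝ}
    {f : (Fin n → α) × (Fin n → β) → Fin m} {g : Fin m × (Fin n → β) → Fin n → γ}
    (hd : Delta1 q δ f g ≤ d) : condRD q δ d ≤ Real.logb 2 m / n :=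
  (condRD_le_condMI (isPmf_letterLaw hq hn _) (margAB_letterLaw hq hn _)
    ((sum_letterLaw_mul q _ fun t => δ t.1 t.2.2).trans_le hd)).trans
    (condMI_letterLaw_le hq hn f g)

end Converse

section RandomCoding

variable {τ α β γ : Type} [Fintype τ] [Fintype α] [Fintype β] [Fintype γ]

theorem IsPmf.exists_le_sum_mul {p : τ → ℝ} (hp : IsPmf p) (F : τ → ℝ) :
    ∃ t, F t ≤ ∑ s, p s * F s := by
  by_contra! h
  obtain ⟨t, ht⟩ := hp.exists_pos
  refine lt_irrefl (∑ s, p s * F s) ?_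
  calc ∑ s, p s * F s = ∑ s, p s * ∑ s', p s' * F s' := by rw [← Finset.sum_mul, hp.2, one_mul]
    _ < ∑ s, p s * F s := Finset.sum_lt_sum (fun s _ => mul_le_mul_of_nonneg_left (h s).le (hp.1 s))
        ⟨t, Finset.mem_univ t, mul_lt_mul_of_pos_left (h t) ht⟩

theorem one_sub_pow_le {a b B : ℝ} (hb0 : 0 ≤ b) (hb1 : b ≤ 1) (ha1 : a ≤ 1) (hB : 0 ≤ B)
    (hab : a ≤ B * b) {m : ℕ} (hm : 0 < m) : (1 - b) ^ m ≤ 1 - a + B / m := by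
  have hm' : (0 : ℝ) < m := Nat.cast_pos.2 hm
  have hmb : 0 < 1 + m * b := by positivity
  have hbernoulli : (1 - b) ^ m * (1 + m * b) ≤ 1 :=
    calc (1 - b) ^ m * (1 + m * b) ≤ (1 - b) ^ m * (1 + b) ^ m := by
          have := sub_nonneg.2 hb1
          gcongr
          exact one_add_mul_le_pow (by linarith) m
      _ = (1 - b ^ 2) ^ m := by rw [← mul_pow]; congr 1; ring
      _ ≤ 1 := pow_le_one₀ (by nlinarith) (by nlinarith)
  have hBb : B * b / (1 + m * b) ≤ B / m := by
    rw [div_le_div_iff₀ hmb hm']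
    nlinarith
  calc (1 - b) ^ m ≤ 1 / (1 + m * b) := (le_div_iff₀ hmb).2 hbernoulli
    _ ≤ 1 - a + a / (1 + m * b) := by
        rw [← sub_nonneg]
        have : 1 - a + a / (1 + m * b) - 1 / (1 + m * b) = (1 - a) * (m * b) / (1 + m * b) := by
          field_simp
          ring
        rw [this]
        have := sub_nonneg.2 ha1
        positivity
    _ ≤ 1 - a + B * b / (1 + m * b) := by gcongr
    _ ≤ 1 - a + B / m := by gcongr

theorem sum_blockLaw_miss_le {w ω : γ → ℝ} (hw : IsPmf w) (hω : IsPmf ω) {G : Set γ} {B : ℝ}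
    (hB : 0 ≤ B) (hG : ∀ c ∈ G, w c ≤ B * ω c) {m : ℕ} (hm : 0 < m) :
    ∑ C, blockLaw ω m C * (if ∃ k, C k ∈ G then 0 else 1)
      ≤ (∑ c, w c * if c ∈ G then 0 else 1) + B / m := by
  have hsplit : ∀ {p : γ → ℝ}, IsPmf p →
      ∑ c, p c * (if c ∈ G then 0 else 1) = 1 - ∑ c, p c * if c ∈ G then 1 else 0 := by
    intro p hp
    rw [eq_sub_iff_add_eq, ← Finset.sum_add_distrib]
    refine Eq.trans (Finset.sum_congr rfl fun c _ => ?_) hp.2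
    split_ifs <;> ring
  have hle : ∀ {p : γ → ℝ}, IsPmf p → ∑ c, p c * (if c ∈ G then 1 else 0) ≤ 1 := by
    intro p hp
    rw [← sub_nonneg, ← hsplit hp]
    exact Finset.sum_nonneg fun c _ => mul_nonneg (hp.1 c) (by positivity)
  calc ∑ C, blockLaw ω m C * (if ∃ k, C k ∈ G then 0 else 1)
      = ∑ C : Fin m → γ, ∏ k, ω (C k) * (if C k ∈ G then 0 else 1) := by
        refine Finset.sum_congr rfl fun C _ => ?_
        rw [Finset.prod_mul_distrib, blockLaw]
        congr 1
        split_ifs with hC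
        · obtain ⟨k, hk⟩ := hC
          exact Eq.symm <| Finset.prod_eq_zero (Finset.mem_univ k) <| if_pos hk
        · push Not at hC
          rw [Finset.prod_eq_one fun k _ => if_neg (hC k)]
    _ = (1 - ∑ c, ω c * if c ∈ G then 1 else 0) ^ m := by
        rw [← Fintype.prod_sum fun _ c => ω c * if c ∈ G then 0 else 1, hsplit hω,
          Finset.prod_const, Finset.card_univ, Fintype.card_fin]
    _ ≤ 1 - (∑ c, w c * if c ∈ G then 1 else 0) + B / m := by
        refine one_sub_pow_le
          (Finset.sum_nonneg fun c _ => mul_nonneg (hω.1 c) (by positivity)) (hle hω) (hle hw) hB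
          ?_ hm
        rw [Finset.mul_sum]
        refine Finset.sum_le_sum fun c _ => ?_
        split_ifs with hc
        · simpa only [mul_one] using hG c hc
        · simp only [mul_zero, le_refl]
    _ = _ := by rw [hsplit hw]

theorem exists_codebook_sum_miss_le {p : α → ℝ} (hp : ∀ x, 0 ≤ p x) {w : α → γ → ℝ}
    (hw : IsCondPmf w) {ω : γ → ℝ} (hω : IsPmf ω) {G : α → Set γ} {B : ℝ} (hB : 0 ≤ B)
    (hG : ∀ x, ∀ c ∈ G x, w x c ≤ B * ω c) {m : ℕ} (hm : 0 < m) :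
    ∃ C : Fin m → γ, ∑ x, p x * (if ∃ k, C k ∈ G x then 0 else 1)
      ≤ ∑ x, p x * ((∑ c, w x c * if c ∈ G x then 0 else 1) + B / m) := by
  obtain ⟨C, hC⟩ := (hω.blockLaw m).exists_le_sum_mul fun C =>
    ∑ x, p x * if ∃ k, C k ∈ G x then 0 else 1
  refine ⟨C, hC.trans ?_⟩
  simp only [Finset.mul_sum]
  rw [Finset.sum_comm]
  simp only [mul_left_comm _ (p _), ← Finset.mul_sum]
  gcongr with x
  · exact hp x
  · exact sum_blockLaw_miss_le (hw x) hω hB (hG x) hm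

theorem exists_code_of_density_le {q : α × β → ℝ} (hq : IsPmf q) {W : α × β → γ → ℝ}
    (hW : IsCondPmf W) {ω : β → γ → ℝ} (hω : IsCondPmf ω) {G : α × β → Set γ} {B : ℝ} (hB : 0 ≤ B)
    (hG : ∀ t, ∀ c ∈ G t, W t c ≤ B * ω t.2 c) {d : α → γ → ℝ} {e D : ℝ} (hD : 0 ≤ D)
    (hGd : ∀ t, ∀ c ∈ G t, d t.1 c ≤ e) (hd : ∀ a c, d a c ≤ e + D) {m : ℕ} (hm : 0 < m) :
    ∃ (f : α × β → Fin m) (g : Fin m × β → γ), ∑ t, q t * d t.1 (g (f t, t.2))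
      ≤ e + D * ((∑ t, q t * ∑ c, W t c * if c ∈ G t then 0 else 1) + B / m) := by
  have := Fin.pos_iff_nonempty.1 hm
  let miss (t : α × β) (C : Fin m → γ) : ℝ := if ∃ k, C k ∈ G t then 0 else 1
  choose C hC using fun y => exists_codebook_sum_miss_le (fun x => hq.1 (x, y))
    (fun x => hW (x, y)) (hω y) hB (fun x => hG (x, y)) hm
  have hencode : ∀ t : α × β, ∃ k, d t.1 (C t.2 k) ≤ e + D * miss t (C t.2) := fun t => by
    by_cases ht : ∃ k, C t.2 k ∈ G t
    · exact ht.imp fun k hk => by simpa only [miss, if_pos ht, mul_zero, add_zero] using hGd t _ hk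
    · exact ⟨Classical.arbitrary _, by simpa only [miss, if_neg ht, mul_one] using hd _ _⟩
  choose f hf using hencode
  refine ⟨f, fun s => C s.2 s.1, ?_⟩
  calc ∑ t, q t * d t.1 (C t.2 (f t)) ≤ ∑ t, q t * (e + D * miss t (C t.2)) := by
        gcongr with t
        · exact hq.1 t
        · exact hf t
    _ = e + D * ∑ y, ∑ x, q (x, y) * miss (x, y) (C y) := by
        rw [← Fintype.sum_prod_type_right fun t => q t * miss t (C t.2), Finset.mul_sum]
        simp only [mul_add, Finset.sum_add_distrib, ← Finset.sum_mul, hq.2, one_mul,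
          mul_left_comm D]
    _ ≤ e + D * ∑ y, ∑ x, q (x, y) *
          ((∑ c, W (x, y) c * if c ∈ G (x, y) then 0 else 1) + B / m) := by
        gcongr e + D * ?_
        exact Finset.sum_le_sum fun y _ => hC y
    _ = _ := by
        rw [← Fintype.sum_prod_type_right fun t =>
          q t * ((∑ c, W t c * if c ∈ G t then 0 else 1) + B / m)]
        simp only [mul_add, Finset.sum_add_distrib, ← Finset.sum_mul, hq.2, one_mul]

end RandomCoding

section Concentration

variable {τ : Type} [Fintype τ]

/-- The probability that the empirical mean of `h` over `n` independent draws from `p` exceeds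
`μ`. -/
def tailProb (p h : τ → ℝ) (μ : ℝ) (n : ℕ) : ℝ :=
  ∑ t, blockLaw p n t * if n * μ < ∑ i, h (t i) then 1 else 0

theorem exists_sum_mul_exp_lt_one {p g : τ → ℝ} (hp : IsPmf p) (hg : ∑ t, p t * g t < 0) :
    ∃ s ≥ 0, ∑ t, p t * Real.exp (s * g t) < 1 := by
  have hderiv : HasDerivAt (fun s => ∑ t, p t * Real.exp (s * g t)) (∑ t, p t * g t) 0 := by
    refine HasDerivAt.fun_sum fun t _ => ?_
    simpa using (((hasDerivAt_id (0 : ℝ)).mul_const (g t)).exp).const_mul (p t)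
  have hslope := (hasDerivAt_iff_tendsto_slope.1 hderiv).eventually_lt_const hg
  obtain ⟨s, hs, hs0 : 0 < s⟩ := ((hslope.filter_mono <|
    nhdsWithin_mono 0 fun s (hs : s ∈ Set.Ioi 0) => ne_of_gt hs).and self_mem_nhdsWithin).exists
  refine ⟨s, hs0.le, ?_⟩
  simpa [slope_def_field, div_lt_iff₀ hs0, hp.2] using hs

/-- Chernoff's bound. -/
theorem tendsto_tailProb {p h : τ → ℝ} {μ : ℝ} (hp : IsPmf p) (hμ : ∑ t, p t * h t < μ) :
    Tendsto (tailProb p h μ) atTop (𝓝 0) := by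
  obtain ⟨s, hs, hlt⟩ := exists_sum_mul_exp_lt_one hp (g := fun t => h t - μ) <| by
    simpa [mul_sub, ← Finset.sum_mul, hp.2] using hμ
  refine squeeze_zero (fun n => Finset.sum_nonneg fun t _ =>
    mul_nonneg ((hp.blockLaw n).1 t) (by positivity)) (fun n => ?_)
    (tendsto_pow_atTop_nhds_zero_of_lt_one
      (Finset.sum_nonneg fun t _ => mul_nonneg (hp.1 t) (Real.exp_nonneg _)) hlt)
  calc tailProb p h μ n = ∑ t, blockLaw p n t * (if n * μ < ∑ i, h (t i) then 1 else 0) := rfl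
    _ ≤ ∑ t : Fin n → τ, blockLaw p n t * Real.exp (s * ∑ i, (h (t i) - μ)) := by
        gcongr with t
        · exact (hp.blockLaw n).1 t
        · split_ifs with ht
          · refine Real.one_le_exp (mul_nonneg hs ?_)
            simpa [Finset.sum_sub_distrib] using ht.le
          · exact Real.exp_nonneg _
    _ = ∑ t : Fin n → τ, ∏ i, p (t i) * Real.exp (s * (h (t i) - μ)) := by
        simp only [Finset.mul_sum, Real.exp_sum, Finset.prod_mul_distrib, blockLaw]
    _ = (∑ t, p t * Real.exp (s * (h t - μ))) ^ n := by
        rw [← Fintype.prod_sum fun _ t => p t * Real.exp (s * (h t - μ)), Finset.prod_const,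
          Finset.card_univ, Fintype.card_fin]

end Concentration

section Achievability

variable {τ α β γ : Type} [Fintype α] [Fintype β] [Fintype γ] {n m : ℕ}

/-- The memoryless channel that uses `W` once for every letter of a block. -/
def blockChannel (W : τ → γ → ℝ) (n : ℕ) : (Fin n → τ) → (Fin n → γ) → ℝ :=
  fun t c => ∏ i, W (t i) (c i)

/-- The information density of the test channel `W` relative to the codeword law `ω`. -/
def infoDensity (W : α × β → γ → ℝ) (ω : β → γ → ℝ) (t : α × β × γ) : ℝ :=
  Real.logb 2 (W (t.1, t.2.1) t.2.2 / ω t.2.1 t.2.2)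

/-- The codewords that are acceptable for the source block `(x, y)`: likely enough under the
codeword law relative to the test channel, and within average distortion `e` of `x`. -/
def acceptableCodewords (W : α × β → γ → ℝ) (ω : β → γ → ℝ) (δ : α → γ → ℝ) (r e : ℝ)
    (xy : (Fin n → α) × (Fin n → β)) : Set (Fin n → γ) :=
  {c | blockChannel W n (fun i => (xy.1 i, xy.2 i)) c ≤ 2 ^ (n * r) * blockChannel ω n xy.2 c ∧
    (n : ℝ)⁻¹ * ∑ i, δ (xy.1 i) (c i) ≤ e}

theorem IsCondPmf.blockChannel {W : τ → γ → ℝ} (hW : IsCondPmf W) (n : ℕ) :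
    IsCondPmf (blockChannel W n) := fun t =>
  ⟨fun _ => Finset.prod_nonneg fun _ _ => (hW _).1 _, by
    simp only [TWR.blockChannel, ← Fintype.prod_sum fun i c => W (t i) c, (hW _).2,
      Finset.prod_const_one]⟩

theorem sum_iid_mul_sum_blockChannel (q : α × β → ℝ) (W : α × β → γ → ℝ)
    (F : (Fin n → α) × (Fin n → β) → (Fin n → γ) → ℝ) :
    ∑ xy, iid q n xy * ∑ c, blockChannel W n (fun i => (xy.1 i, xy.2 i)) c * F xy c
      = ∑ s, blockLaw (channelLaw q W) n s *
          F (fun i => (s i).1, fun i => (s i).2.1) fun i => (s i).2.2 := by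
  simp only [Finset.mul_sum]
  rw [← Fintype.sum_prod_type']
  refine Finset.sum_nbij' (fun z i => (z.1.1 i, z.1.2 i, z.2 i))
    (fun s => ((fun i => (s i).1, fun i => (s i).2.1), fun i => (s i).2.2))
    (fun _ _ => Finset.mem_univ _) (fun _ _ => Finset.mem_univ _) (fun _ _ => rfl)
    (fun _ _ => rfl) fun z _ => ?_
  simp only [iid, blockChannel, blockLaw, channelLaw, Finset.prod_mul_distrib, mul_assoc]

theorem exists_codewordLaw {P : α × β × γ → ℝ} (hP : IsPmf P) :
    ∃ ω : β → γ → ℝ, IsCondPmf ω ∧ ∀ b c, margB P b * ω b c = margBC P b c := by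
  obtain ⟨⟨-, -, c⟩, -⟩ := hP.exists_pos
  have : Nonempty γ := ⟨c⟩
  simpa only [sum_margBC] using exists_condPmf (Q := fun t : β × γ => margBC P t.1 t.2)
    fun t => Finset.sum_nonneg fun _ _ => hP.1 _

variable {q : α × β → ℝ} {W : α × β → γ → ℝ} {ω : β → γ → ℝ} {δ : α → γ → ℝ} {d e r : ℝ}

theorem codewordLaw_pos (hq : IsPmf q) (hW : IsCondPmf W)
    (hω : ∀ b c, margB (channelLaw q W) b * ω b c = margBC (channelLaw q W) b c) {t : α × β × γ}
    (ht : 0 < channelLaw q W t) : 0 < ω t.2.1 t.2.2 := by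
  have hP := (hq.channelLaw hW).1
  have hBC := ht.trans_le (le_margBC hP t)
  rw [← hω] at hBC
  exact pos_of_mul_pos_right hBC (ht.trans_le (le_margB hP t)).le

theorem sum_channelLaw_mul_infoDensity (hq : IsPmf q) (hW : IsCondPmf W)
    (hω : ∀ b c, margB (channelLaw q W) b * ω b c = margBC (channelLaw q W) b c) :
    ∑ t, channelLaw q W t * infoDensity W ω t = condMI (channelLaw q W) := by
  rw [condMI_eq_sum]
  have hP := (hq.channelLaw hW).1
  refine Finset.sum_congr rfl fun t _ => ?_
  rcases (hP t).eq_or_lt with ht | ht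
  · rw [← ht, zero_mul, zero_mul]
  · have hωt := (codewordLaw_pos hq hW hω ht).ne'
    rw [← hω, margAB_channelLaw q hW, infoDensity, Real.logb_div (right_ne_zero_of_mul ht.ne') hωt,
      Real.logb_mul (ht.trans_le (le_margB hP t)).ne' hωt, channelLaw,
      Real.logb_mul (left_ne_zero_of_mul ht.ne') (right_ne_zero_of_mul ht.ne')]
    ring

theorem mul_lt_sum_infoDensity (hq : IsPmf q) (hW : IsCondPmf W)
    (hω : ∀ b c, margB (channelLaw q W) b * ω b c = margBC (channelLaw q W) b c)
    {s : Fin n → α × β × γ} (hs : 0 < blockLaw (channelLaw q W) n s)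
    (hlt : 2 ^ (n * r) * ∏ i, ω (s i).2.1 (s i).2.2
      < ∏ i, W ((s i).1, (s i).2.1) (s i).2.2) :
    n * r < ∑ i, infoDensity W ω (s i) := by
  have hP : ∀ i, 0 < channelLaw q W (s i) := fun i =>
    ((hq.channelLaw hW).1 _).lt_of_ne' (Finset.prod_ne_zero_iff.1 hs.ne' i (Finset.mem_univ i))
  have hωs : ∀ i, 0 < ω (s i).2.1 (s i).2.2 := fun i => codewordLaw_pos hq hW hω (hP i)
  have hWs : ∀ i, W ((s i).1, (s i).2.1) (s i).2.2 ≠ 0 := fun i =>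
    right_ne_zero_of_mul (hP i).ne'
  simp only [infoDensity]
  rw [← Real.logb_prod _ _ fun i _ => div_ne_zero (hWs i) (hωs i).ne', Finset.prod_div_distrib]
  have hprod : 0 < ∏ i, ω (s i).2.1 (s i).2.2 := Finset.prod_pos fun i _ => hωs i
  rw [← lt_div_iff₀ hprod] at hlt
  exact (Real.lt_logb_iff_rpow_lt one_lt_two ((Real.rpow_pos_of_pos two_pos _).trans hlt)).2 hlt

theorem sum_iid_mul_unacceptable_le (hq : IsPmf q) (hW : IsCondPmf W) (hn : n ≠ 0)
    (hω : ∀ b c, margB (channelLaw q W) b * ω b c = margBC (channelLaw q W) b c) :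
    ∑ xy : (Fin n → α) × (Fin n → β), iid q n xy *
        ∑ c, blockChannel W n (fun i => (xy.1 i, xy.2 i)) c *
          (if c ∈ acceptableCodewords W ω δ r e xy then 0 else 1)
      ≤ tailProb (channelLaw q W) (infoDensity W ω) r n
        + tailProb (channelLaw q W) (fun t => δ t.1 t.2.2) e n := by
  have hn' : (0 : ℝ) < n := Nat.cast_pos.2 (Nat.pos_of_ne_zero hn)
  rw [sum_iid_mul_sum_blockChannel q W fun xy c =>
      if c ∈ acceptableCodewords W ω δ r e xy then 0 else 1,
    tailProb, tailProb, ← Finset.sum_add_distrib]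
  refine Finset.sum_le_sum fun s _ => ?_
  rcases (((hq.channelLaw hW).blockLaw n).1 s).eq_or_lt with hs | hs
  · simp only [← hs, zero_mul, add_zero, le_refl]
  rw [← mul_add]
  refine mul_le_mul_of_nonneg_left ?_ hs.le
  by_cases hevents : n * r < ∑ i, infoDensity W ω (s i) ∨ n * e < ∑ i, δ (s i).1 (s i).2.2
  · rcases hevents with hI | hdist
    · rw [if_pos hI]
      split_ifs <;> norm_num
    · rw [if_pos hdist]
      split_ifs <;> norm_num
  · obtain ⟨hI, hdist⟩ := not_or.1 hevents
    rw [if_neg hI, if_neg hdist, if_pos, add_zero]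
    exact ⟨not_lt.1 (mt (mul_lt_sum_infoDensity hq hW hω hs) hI),
      (inv_mul_le_iff₀ hn').2 (not_lt.1 hdist)⟩

theorem exists_code_Delta1_le (hq : IsPmf q) (hW : IsCondPmf W) (hωp : IsCondPmf ω)
    (hω : ∀ b c, margB (channelLaw q W) b * ω b c = margBC (channelLaw q W) b c) {D : ℝ}
    (hD : 0 ≤ D) (hδ : ∀ a c, δ a c ≤ e + D) (hn : n ≠ 0) (hm : 0 < m) :
    ∃ (f : (Fin n → α) × (Fin n → β) → Fin m) (g : Fin m × (Fin n → β) → Fin n → γ),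
      Delta1 q δ f g ≤ e + D * (tailProb (channelLaw q W) (infoDensity W ω) r n
        + tailProb (channelLaw q W) (fun t => δ t.1 t.2.2) e n + 2 ^ (n * r) / m) := by
  have hn' : (0 : ℝ) < n := Nat.cast_pos.2 (Nat.pos_of_ne_zero hn)
  let dn (x : Fin n → α) (c : Fin n → γ) : ℝ := (n : ℝ)⁻¹ * ∑ i, δ (x i) (c i)
  have hdn : ∀ x c, dn x c ≤ e + D := fun x c => by
    rw [inv_mul_le_iff₀ hn']
    calc ∑ i, δ (x i) (c i) ≤ ∑ _i : Fin n, (e + D) := Finset.sum_le_sum fun i _ => hδ _ _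
      _ = n * (e + D) := by simp [mul_add]
  obtain ⟨f, g, hfg⟩ := exists_code_of_density_le (isPmf_iid hq n)
    (W := fun xy => blockChannel W n fun i => (xy.1 i, xy.2 i)) (fun _ => hW.blockChannel n _)
    (hωp.blockChannel n) (G := acceptableCodewords W ω δ r e)
    (Real.rpow_pos_of_pos two_pos (n * r)).le (fun _ _ hc => hc.1) hD (fun _ _ hc => hc.2) hdn hm
  refine ⟨f, g, hfg.trans ?_⟩
  gcongr
  exact sum_iid_mul_unacceptable_le hq hW hn hω

theorem eventually_exists_code (hq : IsPmf q) (hd : Feasible (margX q) δ d)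
    (hr : condRD q δ d < r) (he : d < e) :
    ∀ᶠ n : ℕ in atTop, ∀ m : ℕ, (2 : ℝ) ^ (n * r) ≤ m →
      ∃ (f : (Fin n → α) × (Fin n → β) → Fin m) (g : Fin m × (Fin n → β) → Fin n → γ),
        Delta1 q δ f g ≤ e := by
  obtain ⟨W, hW, hWd, hI⟩ := exists_channel_condMI_lt hd hr
  have hP := hq.channelLaw hW
  obtain ⟨ω, hωp, hω⟩ := exists_codewordLaw hP
  obtain ⟨r', hIr', hr'⟩ := exists_between hI
  obtain ⟨e', hde', he'⟩ := exists_between he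
  obtain ⟨K, hK⟩ := (Set.finite_range fun t : α × γ => δ t.1 t.2).bddAbove
  let D := max (K - e') 0
  have hδ : ∀ a c, δ a c ≤ e' + D := fun a c => by
    linarith [hK ⟨(a, c), rfl⟩, le_max_left (K - e') 0]
  let err (n : ℕ) : ℝ := tailProb (channelLaw q W) (infoDensity W ω) r' n
    + tailProb (channelLaw q W) (fun t => δ t.1 t.2.2) e' n + (2 ^ (r' - r)) ^ n
  have herr : Tendsto (fun n => e' + D * err n) atTop (𝓝 e') := by
    have htail := (tendsto_tailProb hP
      ((sum_channelLaw_mul_infoDensity hq hW hω).trans_lt hIr')).add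
      (tendsto_tailProb hP (hWd.trans_lt hde'))
    have hpow : Tendsto (fun n : ℕ => ((2 : ℝ) ^ (r' - r)) ^ n) atTop (𝓝 0) :=
      tendsto_pow_atTop_nhds_zero_of_lt_one (by positivity)
        (Real.rpow_lt_one_of_one_lt_of_neg one_lt_two (sub_neg.2 hr'))
    simpa only [add_zero, mul_zero] using ((htail.add hpow).const_mul D).const_add e'
  filter_upwards [herr.eventually_lt_const he', eventually_ne_atTop 0] with n hlt hn m hm
  have hm0 : (0 : ℝ) < m := (Real.rpow_pos_of_pos two_pos _).trans_le hm
  obtain ⟨f, g, hfg⟩ := exists_code_Delta1_le (r := r') hq hW hωp hω (le_max_right _ _) hδ hn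
    (Nat.cast_pos.1 hm0)
  have hratio : (2 : ℝ) ^ (n * r') / m ≤ (2 ^ (r' - r)) ^ n :=
    calc (2 : ℝ) ^ (n * r') / m ≤ 2 ^ (n * r') / 2 ^ (n * r) := by gcongr
      _ = (2 ^ (r' - r)) ^ n := by
        rw [← Real.rpow_sub two_pos, ← mul_sub, mul_comm, Real.rpow_mul_natCast two_pos.le]
  refine ⟨f, g, (hfg.trans ?_).trans hlt.le⟩
  simp only [err]
  gcongr

end Achievability

section RateDistortionRegion

variable {α β γ γ' κ : Type} [Fintype α] [Fintype β] {n m : ℕ}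

theorem sum_iid_mul_fst (q : α × β → ℝ) (F : (Fin n → α) → ℝ) :
    ∑ xy, iid q n xy * F xy.1 = ∑ x, blockLaw (margX q) n x * F x := by
  rw [Fintype.sum_prod_type]
  refine Finset.sum_congr rfl fun x _ => ?_
  simp only [← Finset.sum_mul, iid, blockLaw, margX]
  rw [Fintype.prod_sum]

namespace CondIndepGivenCommon

variable {q : α × β → ℝ} {u : α → κ} {v : β → κ}

theorem comp_eq_of_iid_ne_zero (h : CondIndepGivenCommon q u v)
    {xy : (Fin n → α) × (Fin n → β)} (hxy : iid q n xy ≠ 0) : u ∘ xy.1 = v ∘ xy.2 :=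
  funext fun i =>
    not_imp_comm.1 h.eq_zero_of_ne (Finset.prod_ne_zero_iff.1 hxy i (Finset.mem_univ i))

theorem sum_iid_mul_eq (h : CondIndepGivenCommon q u v)
    {F : (Fin n → α) × (Fin n → β) → ℝ} {G : (Fin n → α) → ℝ}
    (hFG : ∀ x y, u ∘ x = v ∘ y → F (x, y) = G x) :
    ∑ xy, iid q n xy * F xy = ∑ x, blockLaw (margX q) n x * G x := by
  rw [← sum_iid_mul_fst]
  refine Finset.sum_congr rfl fun xy _ => ?_
  by_cases h0 : iid q n xy = 0
  · rw [h0, zero_mul, zero_mul]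
  · rw [hFG _ _ (h.comp_eq_of_iid_ne_zero h0)]

theorem Delta1_eq_Delta1_graphLaw [Fintype κ] (h : CondIndepGivenCommon q u v) (δ : α → γ → ℝ)
    {f : (Fin n → α) × (Fin n → β) → Fin m} {g : Fin m × (Fin n → β) → Fin n → γ}
    {f₀ : (Fin n → α) × (Fin n → κ) → Fin m} {g₀ : Fin m × (Fin n → κ) → Fin n → γ}
    (hfg : ∀ x y, u ∘ x = v ∘ y → g (f (x, y), y) = g₀ (f₀ (x, u ∘ x), u ∘ x)) :
    Delta1 q δ f g = Delta1 (graphLaw (margX q) u) δ f₀ g₀ := by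
  let G (x : Fin n → α) : ℝ := (n : ℝ)⁻¹ * ∑ i, δ (x i) (g₀ (f₀ (x, u ∘ x), u ∘ x) i)
  calc Delta1 q δ f g = ∑ x, blockLaw (margX q) n x * G x :=
        h.sum_iid_mul_eq fun x y hxy => by simp only [G, hfg x y hxy]
    _ = ∑ x, blockLaw (margX (graphLaw (margX q) u)) n x * G x := by rw [margX_graphLaw]
    _ = Delta1 (graphLaw (margX q) u) δ f₀ g₀ :=
        ((condIndepGivenCommon_graphLaw h.isPmf.margX u).sum_iid_mul_eq fun x y hxy => by
          simp only [G, hxy, Function.id_comp]).symm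

end CondIndepGivenCommon

theorem Delta2_eq_Delta1_swap (q : α × β → ℝ) (δ : β → γ → ℝ)
    (f : (Fin n → α) × (Fin n → β) → Fin m) (g : Fin m × (Fin n → α) → Fin n → γ) :
    Delta2 q δ f g = Delta1 (swap q) δ (fun t => f (t.2, t.1)) g :=
  Fintype.sum_equiv (Equiv.prodComm _ _) _ _ fun _ => rfl

theorem logb_ceil_two_rpow_div_le {r : ℝ} (hr : 0 ≤ r) (hn : n ≠ 0) :
    Real.logb 2 ⌈(2 : ℝ) ^ (n * r)⌉₊ / n ≤ r + 1 / n := by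
  have hpow : (1 : ℝ) ≤ 2 ^ (n * r) := Real.one_le_rpow one_le_two (by positivity)
  have hlog : Real.logb 2 ⌈(2 : ℝ) ^ (n * r)⌉₊ ≤ n * r + 1 := by
    rw [Real.logb_le_iff_le_rpow one_lt_two (by positivity), Real.rpow_add two_pos, Real.rpow_one]
    linarith [Nat.ceil_lt_add_one (zero_le_one.trans hpow)]
  calc Real.logb 2 ⌈(2 : ℝ) ^ (n * r)⌉₊ / n ≤ (n * r + 1) / n := by gcongr
    _ = r + 1 / n := by field_simp

variable [Fintype γ] [Fintype γ'] {q : α × β → ℝ} {δ₁ : α → γ → ℝ} {δ₂ : β → γ' → ℝ} {d₁ d₂ r : ℝ}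

theorem CondIndepGivenCommon.rdAchievable [Fintype κ] {u : α → κ} {v : β → κ}
    (h : CondIndepGivenCommon q u v) (hd₁ : Feasible (margX q) δ₁ d₁)
    (hd₂ : Feasible (margY q) δ₂ d₂) (hr₁ : condRD (graphLaw (margX q) u) δ₁ d₁ < r)
    (hr₂ : condRD (graphLaw (margY q) v) δ₂ d₂ < r) : RDAchievable q δ₁ δ₂ d₁ d₂ r := by
  intro ε hε
  have hX := (condIndepGivenCommon_graphLaw h.isPmf.margX u).isPmf
  have hY := (condIndepGivenCommon_graphLaw h.swap.isPmf.margX v).isPmf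
  have hr : 0 ≤ r := (condRD_nonneg hX).trans hr₁.le
  obtain ⟨n, hcode₁, hcode₂, hnε, hn⟩ :=
    ((eventually_exists_code hX (by rwa [margX_graphLaw]) hr₁ (lt_add_of_pos_right d₁ hε)).and <|
      (eventually_exists_code hY (by rwa [margX_graphLaw]) hr₂ (lt_add_of_pos_right d₂ hε)).and <|
      ((tendsto_one_div_atTop_nhds_zero_nat (𝕜 := ℝ)).eventually_lt_const hε).and
        (eventually_ne_atTop 0)).exists
  set m := ⌈(2 : ℝ) ^ (n * r)⌉₊
  have : NeZero m := ⟨(Nat.ceil_pos.2 (by positivity)).ne'⟩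
  obtain ⟨f₁, g₁, hfg₁⟩ := hcode₁ m (Nat.le_ceil _)
  obtain ⟨f₂, g₂, hfg₂⟩ := hcode₂ m (Nat.le_ceil _)
  refine ⟨n, m, fun xy => f₁ (xy.1, u ∘ xy.1) + f₂ (xy.2, v ∘ xy.2),
    fun t => g₁ (t.1 - f₂ (t.2, v ∘ t.2), v ∘ t.2), fun t => g₂ (t.1 - f₁ (t.2, u ∘ t.2), u ∘ t.2),
    Nat.pos_of_ne_zero hn, (logb_ceil_two_rpow_div_le hr hn).trans (by gcongr), ?_, ?_⟩
  · rw [h.Delta1_eq_Delta1_graphLaw δ₁ (f₀ := f₁) (g₀ := g₁) fun x y hxy => by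
      simp only [hxy, add_sub_cancel_right]]
    exact hfg₁
  · rw [Delta2_eq_Delta1_swap, h.swap.Delta1_eq_Delta1_graphLaw δ₂ (f₀ := f₂) (g₀ := g₂)
      fun y x hxy => by simp only [hxy, add_sub_cancel_left]]
    exact hfg₂

theorem max_condRD_le_of_rdAchievable (hq : IsPmf q) (hd₁ : Feasible (margX q) δ₁ d₁)
    (hd₂ : Feasible (margY q) δ₂ d₂) (h : RDAchievable q δ₁ δ₂ d₁ d₂ r) :
    max (condRD q δ₁ d₁) (condRD (swap q) δ₂ d₂) ≤ r := by
  have hq' : IsPmf (swap q) := ⟨fun _ => hq.1 _, ((Equiv.prodComm β α).sum_comp q).trans hq.2⟩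
  refine max_le (condRD_le_of_forall_pos hq hd₁ fun ε hε => ?_)
    (condRD_le_of_forall_pos hq' hd₂ fun ε hε => ?_)
  all_goals obtain ⟨n, m, f, g₁, g₂, hn, hrate, hΔ₁, hΔ₂⟩ := h ε hε
  · exact (condRD_Delta1_le hq hn.ne' hΔ₁).trans hrate
  · rw [Delta2_eq_Delta1_swap] at hΔ₂
    exact (condRD_Delta1_le hq' hn.ne' hΔ₂).trans hrate

theorem CondIndepGivenCommon.RD_eq [Fintype κ] {u : α → κ} {v : β → κ}
    (h : CondIndepGivenCommon q u v) (hd₁ : Feasible (margX q) δ₁ d₁)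
    (hd₂ : Feasible (margY q) δ₂ d₂) :
    RD q δ₁ δ₂ d₁ d₂
      = max (condRD (graphLaw (margX q) u) δ₁ d₁) (condRD (graphLaw (margY q) v) δ₂ d₂) := by
  have hmem {r : ℝ} (hr : max (condRD (graphLaw (margX q) u) δ₁ d₁)
      (condRD (graphLaw (margY q) v) δ₂ d₂) < r) : 0 ≤ r ∧ RDAchievable q δ₁ δ₂ d₁ d₂ r := by
    obtain ⟨hr₁, hr₂⟩ := max_lt_iff.1 hr
    exact ⟨(condRD_nonneg (condIndepGivenCommon_graphLaw h.isPmf.margX u).isPmf).trans hr₁.le,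
      h.rdAchievable hd₁ hd₂ hr₁ hr₂⟩
  refine le_antisymm (le_of_forall_gt_imp_ge_of_dense fun r hr =>
    csInf_le ⟨0, fun _ hs => hs.1⟩ (hmem hr)) (le_csInf ⟨_, hmem (lt_add_one _)⟩ fun r hr => ?_)
  have hmax := max_condRD_le_of_rdAchievable h.isPmf hd₁ hd₂ hr.2
  rwa [h.condRD_eq_condRD_graphLaw hd₁, h.swap.condRD_eq_condRD_graphLaw hd₂] at hmax

end RateDistortionRegion

section SpecialSources

theorem feasible_of_forall_exists_eq_zero {α γ : Type} [Fintype α] {δ : α → γ → ℝ}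
    (hδ : ∀ x, ∃ c, δ x c = 0) {d : ℝ} (hd : 0 ≤ d) (p : α → ℝ) : Feasible p δ d := by
  choose g hg using hδ
  exact ⟨g, by simpa only [hg, mul_zero, Finset.sum_const_zero] using hd⟩

section Independent

variable {α β γ : Type} {p : α → ℝ} {p' : β → ℝ}

theorem margX_mul [Fintype β] (p : α → ℝ) (hp' : IsPmf p') :
    margX (fun t : α × β => p t.1 * p' t.2) = p := by
  ext x
  simp only [margX, ← Finset.mul_sum, hp'.2, mul_one]

theorem margY_mul [Fintype α] (hp : IsPmf p) (p' : β → ℝ) :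
    margY (fun t : α × β => p t.1 * p' t.2) = p' := by
  ext y
  simp only [margY, ← Finset.sum_mul, hp.2, one_mul]

theorem condIndepGivenCommon_mul [Fintype α] [Fintype β] (hp : IsPmf p) (hp' : IsPmf p') :
    CondIndepGivenCommon (fun t : α × β => p t.1 * p' t.2) (fun _ => ()) (fun _ => ()) where
  isPmf := ⟨fun _ => mul_nonneg (hp.1 _) (hp'.1 _), by
    simp only [Fintype.sum_prod_type, ← Finset.mul_sum, hp'.2, mul_one, hp.2]⟩
  eq_zero_of_ne hne := absurd rfl hne
  mul_eq _ := by
    simp only [margX_mul p hp', margY_mul hp p', pushforward, if_true, hp.2, mul_one]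

variable [Fintype α] [Fintype γ]

theorem condMI_unit {P : α × Unit × γ → ℝ} (hP : IsPmf P) :
    condMI P = MI fun t : α × γ => P (t.1, (), t.2) := by
  have h0 : ∑ a, ∑ c, P (a, (), c) = 1 := by
    simpa [Fintype.sum_prod_type] using hP.2
  simp [condMI, MI, H2, Fintype.sum_prod_type, h0]

theorem condMI_channelLaw_graphLaw_unit (hp : IsPmf p) {W : α × Unit → γ → ℝ} (hW : IsCondPmf W) :
    condMI (channelLaw (graphLaw p fun _ => ()) W)
      = MI fun t : α × γ => p t.1 * W (t.1, ()) t.2 := by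
  rw [condMI_unit ((condIndepGivenCommon_graphLaw hp fun _ => ()).isPmf.channelLaw hW)]
  simp only [channelLaw, graphLaw, if_true]

theorem condRD_graphLaw_unit (hp : IsPmf p) (δ : α → γ → ℝ) (d : ℝ) :
    condRD (graphLaw p fun _ => ()) δ d = margRD p δ d := by
  have hdist (W : α × Unit → γ → ℝ) : expectedDistortion δ (channelLaw (graphLaw p fun _ => ()) W)
      = ∑ x, ∑ c, p x * W (x, ()) c * δ x c := by
    simp [expectedDistortion, sum_triple, channelLaw, graphLaw]
  rw [condRD_eq_sInf, margRD]
  congr 1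
  ext r
  constructor
  · rintro ⟨W, hW, hd, rfl⟩
    exact ⟨fun x => W (x, ()), fun x => hW (x, ()), (hdist W).symm.trans_le hd,
      condMI_channelLaw_graphLaw_unit hp hW⟩
  · rintro ⟨W, hW, hd, rfl⟩
    have hW' : IsCondPmf fun t : α × Unit => W t.1 := fun t => hW t.1
    exact ⟨_, hW', (hdist _).trans_le hd, (condMI_channelLaw_graphLaw_unit hp hW').symm⟩

theorem RD_mul {γ' : Type} [Fintype β] [Fintype γ'] (hp : IsPmf p) (hp' : IsPmf p')
    {δ₁ : α → γ → ℝ} {δ₂ : β → γ' → ℝ} {d₁ d₂ : ℝ} (hd₁ : Feasible p δ₁ d₁)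
    (hd₂ : Feasible p' δ₂ d₂) :
    RD (fun t : α × β => p t.1 * p' t.2) δ₁ δ₂ d₁ d₂ = max (margRD p δ₁ d₁) (margRD p' δ₂ d₂) := by
  rw [(condIndepGivenCommon_mul hp hp').RD_eq (by rwa [margX_mul p hp']) (by rwa [margY_mul hp p']),
    margX_mul p hp', margY_mul hp p', condRD_graphLaw_unit hp, condRD_graphLaw_unit hp']

end Independent

section SharedComponent

variable {X' 𝒰 Y' : Type}

/-- The joint law of `(X', U)` and `(Y', U)` when `(X', U, Y')` has law `p`. -/
def sharedLaw (p : X' × 𝒰 × Y' → ℝ) : (X' × 𝒰) × (Y' × 𝒰) → ℝ :=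
  fun t => if t.1.2 = t.2.2 then p (t.1.1, t.1.2, t.2.1) else 0

theorem margX_sharedLaw [Fintype 𝒰] [Fintype Y'] (p : X' × 𝒰 × Y' → ℝ) :
    margX (sharedLaw p) = fun t => ∑ y', p (t.1, t.2, y') := by
  ext t
  simp [margX, sharedLaw, Fintype.sum_prod_type]

theorem margY_sharedLaw [Fintype X'] [Fintype 𝒰] (p : X' × 𝒰 × Y' → ℝ) :
    margY (sharedLaw p) = fun t => ∑ x', p (x', t.2, t.1) := by
  ext t
  simp [margY, sharedLaw, Fintype.sum_prod_type]

theorem Markov.condIndepGivenCommon_sharedLaw [Fintype X'] [Fintype 𝒰] [Fintype Y']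
    {p : X' × 𝒰 × Y' → ℝ} (hM : Markov p) (hp : IsPmf p) :
    CondIndepGivenCommon (sharedLaw p) Prod.snd Prod.snd where
  isPmf := ⟨fun t => ite_nonneg (hp.1 _) le_rfl, by
    simp only [← hp.2, Fintype.sum_prod_type]
    exact Finset.sum_congr rfl fun x' _ => Finset.sum_congr rfl fun k _ =>
      by simp [sharedLaw]⟩
  eq_zero_of_ne h := if_neg h
  mul_eq {x y} hxy := by
    rw [margX_sharedLaw, margY_sharedLaw, sharedLaw, if_pos hxy, ← hxy]
    simpa [pushforward, Fintype.sum_prod_type, hxy] using hM x.1 x.2 y.1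

theorem graphLaw_snd (p : X' × 𝒰 → ℝ) :
    graphLaw p Prod.snd = fun t => if t.1.2 = t.2 then p (t.1.1, t.2) else 0 :=
  funext fun _ => if_ctx_congr Iff.rfl (fun h => by rw [← h]) fun _ => rfl

end SharedComponent

end SpecialSources

end TWR

open TWR in
theorem rd_conditionally_independent_general {α β γ γ' κ : Type}
    [Fintype α] [Fintype β] [Fintype γ] [Fintype γ'] [Fintype κ]
    {q : α × β → ℝ} {u : α → κ} {v : β → κ} (h : CondIndepGivenCommon q u v)
    {δ₁ : α → γ → ℝ} {δ₂ : β → γ' → ℝ} {d₁ d₂ : ℝ}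
    (hd₁ : Feasible (margX q) δ₁ d₁) (hd₂ : Feasible (margY q) δ₂ d₂) :
    RD q δ₁ δ₂ d₁ d₂ = max (condRD q δ₁ d₁) (condRD (swap q) δ₂ d₂) ∧
    RD q δ₁ δ₂ d₁ d₂ = max (wzRD q δ₁ d₁) (wzRD (swap q) δ₂ d₂) ∧
    RD q δ₁ δ₂ d₁ d₂
      = max (condRD (graphLaw (margX q) u) δ₁ d₁) (condRD (graphLaw (margY q) v) δ₂ d₂) := by
  rw [h.condRD_eq_condRD_graphLaw hd₁, h.swap.condRD_eq_condRD_graphLaw hd₂,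
    h.wzRD_eq_condRD_graphLaw hd₁, h.swap.wzRD_eq_condRD_graphLaw hd₂]
  exact ⟨h.RD_eq hd₁ hd₂, h.RD_eq hd₁ hd₂, h.RD_eq hd₁ hd₂⟩

open TWR in
/-- Corollary 1: if `X = (X',U)`, `Y = (Y',U)` with
`X' − U − Y'` a Markov chain, then `R(d1,d2)` equals the cut-set bound, the
compress-linear bound, and `max{R_{X|U}(d1), R_{Y|U}(d2)}`; in particular, for
independent sources `R(d1,d2) = max{R_X(d1), R_Y(d2)}`. -/
theorem rd_conditionally_independent
    {X' 𝒰 Y' Xh Yh : Type}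
    [Fintype X'] [Fintype 𝒰] [Fintype Y'] [Fintype Xh] [Fintype Yh]
    (p : X' × 𝒰 × Y' → ℝ) (hp : IsPmf p) (hMarkov : Markov p)
    (q : (X' × 𝒰) × (Y' × 𝒰) → ℝ)
    (hq : q = fun t => if t.1.2 = t.2.2 then p (t.1.1, t.1.2, t.2.1) else 0)
    (δ1 : X' × 𝒰 → Xh → ℝ) (δ2 : Y' × 𝒰 → Yh → ℝ) (d1max d2max : ℝ)
    (hδ1 : ∀ x xh, 0 ≤ δ1 x xh ∧ δ1 x xh ≤ d1max)
    (hδ2 : ∀ y yh, 0 ≤ δ2 y yh ∧ δ2 y yh ≤ d2max)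
    (hδ1n : ∀ x, ∃ xh, δ1 x xh = 0) (hδ2n : ∀ y, ∃ yh, δ2 y yh = 0)
    (d1 d2 : ℝ) (hd1 : 0 ≤ d1) (hd2 : 0 ≤ d2) :
    (RD q δ1 δ2 d1 d2 = max (condRD q δ1 d1) (condRD (swap q) δ2 d2) ∧
     RD q δ1 δ2 d1 d2 = max (wzRD q δ1 d1) (wzRD (swap q) δ2 d2) ∧
     RD q δ1 δ2 d1 d2 =
       max (condRD (fun t : (X' × 𝒰) × 𝒰 =>
              if t.1.2 = t.2 then ∑ y', p (t.1.1, t.2, y') else 0) δ1 d1)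
           (condRD (fun t : (Y' × 𝒰) × 𝒰 =>
              if t.1.2 = t.2 then ∑ x', p (x', t.2, t.1.1) else 0) δ2 d2)) ∧
    (∀ (𝒳₂ 𝒴₂ : Type) [Fintype 𝒳₂] [Fintype 𝒴₂]
        (qX : 𝒳₂ → ℝ) (qY : 𝒴₂ → ℝ), IsPmf qX → IsPmf qY →
      ∀ (δ1' : 𝒳₂ → Xh → ℝ) (δ2' : 𝒴₂ → Yh → ℝ),
        (∀ x xh, 0 ≤ δ1' x xh ∧ δ1' x xh ≤ d1max) →
        (∀ y yh, 0 ≤ δ2' y yh ∧ δ2' y yh ≤ d2max) →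
        (∀ x, ∃ xh, δ1' x xh = 0) → (∀ y, ∃ yh, δ2' y yh = 0) →
        RD (fun t : 𝒳₂ × 𝒴₂ => qX t.1 * qY t.2) δ1' δ2' d1 d2 =
          max (margRD qX δ1' d1) (margRD qY δ2' d2)) := by
  refine ⟨?_, fun _ _ _ _ qX qY hqX hqY δ1' δ2' _ _ hδ1n' hδ2n' => ?_⟩
  · obtain rfl : q = sharedLaw p := hq
    have h := rd_conditionally_independent_general (hMarkov.condIndepGivenCommon_sharedLaw hp)
      (feasible_of_forall_exists_eq_zero hδ1n hd1 _) (feasible_of_forall_exists_eq_zero hδ2n hd2 _)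
    rwa [margX_sharedLaw, margY_sharedLaw, graphLaw_snd, graphLaw_snd] at h
  · exact RD_mul hqX hqY (feasible_of_forall_exists_eq_zero hδ1n' hd1 _)
      (feasible_of_forall_exists_eq_zero hδ2n' hd2 _)
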